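/- arXiv:1809.07699 — 4 statements merged into one kernel-verified Lean document; each statement's English description precedes it below -/
import Mathlib

section
/- Let p be a prime. If a finite p-group G has a faithful irreducible complex character of degree p, then G has a normal abelian subgroup of index p and cd(G) = {1, p}. -/
open CategoryTheory

/-- The degree of a complex representation: the dimension of the underlying vector space. -/
noncomputable def repDegree {G : Type} [Group G] (V : FDRep ℂ G) : ℕ :=
  Module.finrank ℂ V

/-- The kernel of a representation of `G`, as a subgroup of `G`. -/
noncomputable def repKer {G : Type} [Group G] (V : FDRep ℂ G) : Subgroup G :=
  MonoidHom.ker (Representation.asGroupHom V.ρ)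

/-- The codegree of a character: `|G : ker χ| / χ(1)`. -/
noncomputable def codegree {G : Type} [Group G] (V : FDRep ℂ G) : ℕ :=
  (repKer V).index / repDegree V

/-- `cod(G)`: the set of codegrees of the irreducible complex characters of `G`. -/
def codSet (G : Type) [Group G] : Set ℕ :=
  {m | ∃ V : FDRep ℂ G, Simple V ∧ codegree V = m}

/-- `cd(G)`: the set of degrees of the irreducible complex characters of `G`. -/
def cdSet (G : Type) [Group G] : Set ℕ :=
  {m | ∃ V : FDRep ℂ G, Simple V ∧ repDegree V = m}

/-- The nilpotency class of `G`: the least `n` with `upperCentralSeries G n = ⊤`. -/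
noncomputable def nilClass (G : Type) [Group G] : ℕ :=
  sInf {n | upperCentralSeries G n = ⊤}

open scoped Classical in
/-- The character of `G` induced from the linear character `lam` of the subgroup `H`. -/
noncomputable def indLinearChar {G : Type} [Group G] [Fintype G] (H : Subgroup G)
    (lam : H →* ℂˣ) : G → ℂ :=
  fun g => (∑ x : G, if h : x * g * x⁻¹ ∈ H then ((lam ⟨x * g * x⁻¹, h⟩ : ℂˣ) : ℂ) else 0) /
    (Nat.card H : ℂ)

/-- A finite group is normally monomial if every irreducible complex character is induced
from a linear character of a normal subgroup. -/
def NormallyMonomial (G : Type) [Group G] [Fintype G] : Prop :=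
  ∀ V : FDRep ℂ G, Simple V → ∃ (H : Subgroup G) (lam : H →* ℂˣ),
    H.Normal ∧ FDRep.character V = indLinearChar H lam


lemma simple_inv {G : Type} [Group G] (V : FDRep ℂ G) (hV : Simple V)
    (N : Submodule ℂ V) (hN : ∀ g, ∀ v ∈ N, V.ρ g v ∈ N) : N = ⊥ ∨ N = ⊤ := by
  let σ : Representation ℂ G N :=
    { toFun := fun g => (V.ρ g).restrict (hN g)
      map_one' := by ext; simp
      map_mul' := fun x y => by ext; simp }
  let i : FDRep.of σ ⟶ V :=
    ⟨InducedCategory.homMk (ModuleCat.ofHom N.subtype), fun g => by ext1; rfl⟩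
  have hi : ∀ x : N, i.hom.hom.hom x = (x : V) := fun x => rfl
  have hmono : Mono i := by
    apply Functor.mono_of_mono_map (Action.forget _ _)
    apply Functor.mono_of_mono_map (forget₂ (FGModuleCat ℂ) (ModuleCat ℂ))
    rw [ModuleCat.mono_iff_injective]
    exact N.injective_subtype
  by_cases h0 : i = 0
  · left
    rw [eq_bot_iff]
    intro x hx
    have := hi ⟨x, hx⟩
    rw [h0] at this
    exact this.symm
  · right
    have : IsIso i := isIso_of_mono_of_nonzero h0
    rw [eq_top_iff]
    intro x _
    have e : (inv i ≫ i) = 𝟙 _ := IsIso.inv_hom_id i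
    have e2 : i.hom.hom.hom ((inv i).hom.hom.hom x) = x := by
      have := congrArg (fun f : V ⟶ V => f.hom.hom.hom x) e
      exact this
    rw [← e2, hi]
    exact Subtype.property _

lemma simple_nontriv {G : Type} [Group G] (V : FDRep ℂ G) (hV : Simple V) : Nontrivial V := by
  by_contra h
  rw [not_nontrivial_iff_subsingleton] at h
  apply id_nonzero V
  ext1; ext1; ext1
  exact Subsingleton.elim _ _

lemma one_mem_cd (G : Type) [Group G] [Fintype G] : 1 ∈ cdSet G := by
  refine ⟨FDRep.of (Representation.trivial ℂ G ℂ), ?_, ?_⟩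
  · rw [FDRep.simple_iff_char_is_norm_one]
    simp [FDRep.character]
  · exact Module.finrank_self ℂ

lemma common_eig {W : Type*} [AddCommGroup W] [Module ℂ W] [FiniteDimensional ℂ W] [Nontrivial W]
    {ι : Type*} (f : ι → Module.End ℂ W) (hc : ∀ i j, Commute (f i) (f j)) :
    ∃ v : W, v ≠ 0 ∧ ∃ μ : ι → ℂ, ∀ i, f i v = μ i • v := by
  let S : Set (Submodule ℂ W) := {N | N ≠ ⊥ ∧ ∀ i, ∀ v ∈ N, f i v ∈ N}
  have hS : S.Nonempty := ⟨⊤, top_ne_bot, by simp⟩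
  obtain ⟨N, ⟨hN0, hN⟩, hmin⟩ := WellFounded.has_min (wellFounded_lt (α := Submodule ℂ W)) S hS
  have key : ∀ i, ∃ μ : ℂ, ∀ v ∈ N, f i v = μ • v := by
    intro i
    have : Nontrivial N := Submodule.nontrivial_iff_ne_bot.2 hN0
    obtain ⟨μ, hμ⟩ := Module.End.exists_eigenvalue ((f i).restrict (hN i))
    obtain ⟨w, hw⟩ := hμ.exists_hasEigenvector
    refine ⟨μ, ?_⟩
    have hle : N ⊓ (f i).eigenspace μ ≤ N := inf_le_left
    have hmem : N ⊓ (f i).eigenspace μ ∈ S := by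
      constructor
      · rw [Submodule.ne_bot_iff]
        refine ⟨w, ⟨w.2, ?_⟩, ?_⟩
        · simp only [SetLike.mem_coe, Module.End.mem_eigenspace_iff]
          exact congrArg Subtype.val hw.apply_eq_smul
        · simpa using hw.2
      · rintro j v ⟨h1, h2⟩
        refine ⟨hN j v h1, ?_⟩
        simp only [SetLike.mem_coe, Module.End.mem_eigenspace_iff] at h2 ⊢
        have := congrArg (fun T : Module.End ℂ W => T v) (hc i j).eq
        simp only [Module.End.mul_apply] at this
        rw [this, h2, map_smul]
    have heq : N ⊓ (f i).eigenspace μ = N := by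
      by_contra hne
      exact hmin _ hmem (lt_of_le_of_ne hle hne)
    intro v hv
    rw [← heq] at hv
    exact Module.End.mem_eigenspace_iff.1 hv.2
  obtain ⟨v, hv, hv0⟩ := (Submodule.ne_bot_iff _).1 hN0
  choose μ hμ using key
  exact ⟨v, hv0, μ, fun i => hμ i v hv⟩

/-- Schur. -/
lemma schur {G W : Type*} [Group G] [AddCommGroup W] [Module ℂ W] [FiniteDimensional ℂ W]
    [Nontrivial W] (ρ : G →* Module.End ℂ W)
    (hirr : ∀ N : Submodule ℂ W, (∀ g, ∀ v ∈ N, ρ g v ∈ N) → N = ⊥ ∨ N = ⊤)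
    (T : Module.End ℂ W) (hT : ∀ g, Commute (ρ g) T) : ∃ c : ℂ, ∀ v, T v = c • v := by
  obtain ⟨μ, hμ⟩ := Module.End.exists_eigenvalue T
  refine ⟨μ, fun v => ?_⟩
  have hinv : ∀ g, ∀ v ∈ T.eigenspace μ, ρ g v ∈ T.eigenspace μ := by
    intro g v hv
    rw [Module.End.mem_eigenspace_iff] at hv ⊢
    have := congrArg (fun S : Module.End ℂ W => S v) (hT g).eq
    simp only [Module.End.mul_apply] at this
    rw [← this, hv, map_smul]
  have h := (hirr (T.eigenspace μ) hinv).resolve_left hμ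
  exact Module.End.mem_eigenspace_iff.1 (h ▸ Submodule.mem_top)

lemma prime_index_le {G : Type*} [Group G] {p : ℕ} (hp : p.Prime) {A S : Subgroup G}
    (hA : A.index = p) (h : A ≤ S) : S = A ∨ S = ⊤ := by
  have h1 := Subgroup.relIndex_mul_index h
  rw [hA] at h1
  have h2 : S.index ∣ p := ⟨_, by rw [← h1, mul_comm]⟩
  rcases (Nat.dvd_prime hp).1 h2 with h3 | h3
  · right; exact Subgroup.index_eq_one.1 h3
  · left
    rw [h3] at h1
    have : A.relIndex S = 1 := by
      have := hp.pos
      nlinarith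
    exact le_antisymm (Subgroup.relIndex_eq_one.1 this) h

lemma deg_of_abelian {G W : Type*} [Group G] [AddCommGroup W] [Module ℂ W]
    [FiniteDimensional ℂ W] [Nontrivial W] (ρ : G →* Module.End ℂ W)
    (hirr : ∀ N : Submodule ℂ W, (∀ g, ∀ v ∈ N, ρ g v ∈ N) → N = ⊥ ∨ N = ⊤)
    {p : ℕ} (hp : p.Prime) (A : Subgroup G) (hn : A.Normal) (hab : ∀ a b : A, a * b = b * a)
    (hA : A.index = p) : Module.finrank ℂ W = 1 ∨ Module.finrank ℂ W = p := by
  have hmul : ∀ (a b : G) (v : W), ρ (a * b) v = ρ a (ρ b v) := fun a b v => by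
    rw [map_mul]; rfl
  have hcomm : ∀ a b : A, Commute (ρ a) (ρ b) := fun a b => by
    have := congrArg (fun x : A => ρ (x : G)) (hab a b)
    simpa [Commute, SemiconjBy] using this
  obtain ⟨v, hv0, μ, hμ⟩ := common_eig (fun a : A => ρ (a : G)) hcomm
  have hfin : Finite (G ⧸ A) := by
    apply Nat.finite_of_card_ne_zero
    change A.index ≠ 0
    rw [hA]; exact hp.ne_zero
  let _ := Fintype.ofFinite (G ⧸ A)
  have hcard : Fintype.card (G ⧸ A) = p := by
    rw [← Nat.card_eq_fintype_card]; exact hA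
  let b : G ⧸ A → W := fun q => ρ q.out v
  have hb0 : ∀ q, b q ≠ 0 := by
    intro q h
    apply hv0
    have : ρ (q.out⁻¹) (b q) = v := by
      rw [← hmul]; simp
    rw [← this, h, map_zero]
  have hact : ∀ (g : G) (q : G ⧸ A), ∃ c : ℂ, ρ g (b q) = c • b ((g * q.out : G) : G ⧸ A) := by
    intro g q
    have hm : ((((g * q.out : G) : G ⧸ A)).out)⁻¹ * (g * q.out) ∈ A := by
      rw [← QuotientGroup.eq]; simp
    refine ⟨μ ⟨_, hm⟩, ?_⟩
    change ρ g (ρ q.out v) = _ • ρ _ v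
    rw [← map_smul, ← hμ, ← hmul, ← hmul]
    simp
  have hspan : Submodule.span ℂ (Set.range b) = ⊤ := by
    refine (hirr _ ?_).resolve_left ?_
    · intro g w hw
      have : Submodule.span ℂ (Set.range b) ≤ (Submodule.span ℂ (Set.range b)).comap (ρ g) := by
        rw [Submodule.span_le]
        rintro _ ⟨q, rfl⟩
        obtain ⟨c, hc⟩ := hact g q
        simp only [Submodule.comap_coe, Set.mem_preimage, SetLike.mem_coe]
        rw [hc]
        exact Submodule.smul_mem _ _ (Submodule.subset_span ⟨_, rfl⟩)
      exact this hw
    · intro h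
      rw [Submodule.span_eq_bot] at h
      exact hb0 ((1 : G) : G ⧸ A) (h _ ⟨_, rfl⟩)
  have hle : Module.finrank ℂ W ≤ p := by
    rw [← hcard, ← finrank_top ℂ W, ← hspan]
    exact finrank_range_le_card b
  -- conjugation of weights
  let cj : G → A → A := fun g a => ⟨g⁻¹ * a * g, by
    simpa using hn.conj_mem a a.2 g⁻¹⟩
  have hcj : ∀ (g : G) (a : A), ρ a (ρ g v) = μ (cj g a) • ρ g v := by
    intro g a
    rw [← map_smul, ← hμ, ← hmul, ← hmul]
    congr 2
    simp [cj, mul_assoc]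
  have hcjmul : ∀ g h a, cj (g * h) a = cj h (cj g a) := by
    intro g h a; apply Subtype.ext; simp [cj, mul_assoc]
  let S : Subgroup G :=
    { carrier := {g | ∀ a, μ (cj g a) = μ a}
      one_mem' := fun a => by simp [cj]
      mul_mem' := fun {x y} hx hy a => by
        rw [hcjmul, hy, hx]
      inv_mem' := fun {x} hx a => by
        rw [← hx, ← hcjmul]; simp [cj] }
  have hAS : A ≤ S := by
    intro x hx a
    have : cj x a = a := by
      have := hab a ⟨x, hx⟩
      have := congrArg Subtype.val this
      apply Subtype.ext
      simp only [Subgroup.coe_mul] at this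
      simp [cj, mul_assoc, this]
    rw [this]
  rcases prime_index_le hp hA hAS with hS | hS
  · right
    apply le_antisymm hle
    rw [← hcard]
    have hinj : Function.Injective (fun (q : G ⧸ A) (a : A) => μ (cj q.out a)) := by
      intro q r hqr
      have : q.out⁻¹ * r.out ∈ S := by
        intro a
        rw [hcjmul, ← show ∀ c, μ (cj q.out c) = μ (cj r.out c) from congrFun hqr, ← hcjmul]
        simp [cj]
      rw [hS, ← QuotientGroup.eq] at this
      simpa using this
    have hind := Module.End.independent_iInf_maxGenEigenspace_of_forall_mapsTo
      (fun a : A => ρ (a : G)) (fun i j φ =>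
        Module.End.mapsTo_maxGenEigenspace_of_comm (hcomm j i) φ)
    have hli : LinearIndependent ℂ b := by
      refine (hind.comp hinj).linearIndependent _ (fun q => ?_) hb0
      simp only [Function.comp, Submodule.mem_iInf]
      intro a
      apply Module.End.genEigenspace_le_maximal (ρ (a : G)) _ 1
      rw [Nat.cast_one]
      refine Module.End.mem_eigenspace_iff.2 ?_
      exact hcj _ _
    exact hli.fintype_card_le_finrank
  · left
    have hsc : ∀ (a : A) (w : W), ρ a w = μ a • w := by
      intro a w
      have : Submodule.span ℂ (Set.range b) ≤ Module.End.eigenspace (ρ a) (μ a) := by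
        rw [Submodule.span_le]
        rintro _ ⟨q, rfl⟩
        have h1 : q.out ∈ S := hS ▸ Subgroup.mem_top _
        rw [SetLike.mem_coe, Module.End.mem_eigenspace_iff, ← h1 a]
        exact hcj _ _
      rw [hspan] at this
      exact Module.End.mem_eigenspace_iff.1 (this Submodule.mem_top)
    obtain ⟨g, hg⟩ : ∃ g, g ∉ A := by
      by_contra! h
      have : A = ⊤ := by rw [eq_top_iff]; intro x _; exact h x
      rw [this, Subgroup.index_top] at hA
      exact hp.ne_one hA.symm
    obtain ⟨ν, hν⟩ := Module.End.exists_eigenvalue (ρ g)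
    obtain ⟨w, hw⟩ := hν.exists_hasEigenvector
    let L : Subgroup G :=
      { carrier := {x | ∃ c : ℂ, c ≠ 0 ∧ ρ x w = c • w}
        one_mem' := ⟨1, one_ne_zero, by simp⟩
        mul_mem' := by
          rintro x y ⟨c, hc, h1⟩ ⟨d, hd, h2⟩
          exact ⟨d * c, mul_ne_zero hd hc, by rw [hmul, h2, map_smul, h1, smul_smul]⟩
        inv_mem' := by
          rintro x ⟨c, hc, h1⟩
          refine ⟨c⁻¹, inv_ne_zero hc, ?_⟩
          rw [eq_inv_smul_iff₀ hc, ← map_smul, ← h1, ← hmul]; simp }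
    have hinvt : ∀ (x : G) (c : ℂ), ρ x w = c • w → c ≠ 0 := by
      rintro x c h rfl
      apply hw.2
      have : ρ (x⁻¹) (ρ x w) = w := by rw [← hmul]; simp
      rw [← this, h]; simp
    have hgL : g ∈ L := ⟨ν, hinvt _ _ hw.apply_eq_smul, hw.apply_eq_smul⟩
    have hAL : A ≤ L := fun a ha => ⟨μ ⟨a, ha⟩, hinvt _ _ (hsc ⟨a, ha⟩ w), hsc ⟨a, ha⟩ w⟩
    have hL : L = ⊤ := by
      rcases prime_index_le hp hA hAL with h | h
      · exact absurd (h ▸ hgL) hg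
      · exact h
    have htop : Submodule.span ℂ {w} = ⊤ := by
      refine (hirr _ ?_).resolve_left ?_
      · intro x u hu
        obtain ⟨c, rfl⟩ := Submodule.mem_span_singleton.1 hu
        obtain ⟨d, -, hd⟩ : x ∈ L := hL ▸ Subgroup.mem_top _
        rw [map_smul, hd]
        exact Submodule.smul_mem _ _ (Submodule.smul_mem _ _ (Submodule.mem_span_singleton_self w))
      · simpa using hw.2
    rw [← finrank_top ℂ W, ← htop, finrank_span_singleton hw.2]

lemma diag_mem {W : Type*} [AddCommGroup W] [Module ℂ W] {ι : Type*} (b : Module.Basis ι ℂ W)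
    (μ : ι → ℂ) (hμ : Function.Injective μ) (X : Module.End ℂ W) (hX : ∀ i, X (b i) = μ i • b i)
    (T : Module.End ℂ W) (hT : Commute X T) (i : ι) : ∃ c : ℂ, T (b i) = c • b i := by
  have h1 : ∀ j w, b.coord j (X w) = μ j * b.coord j w := by
    intro j
    have : (b.coord j).comp X = μ j • b.coord j := by
      apply b.ext
      intro k
      simp only [LinearMap.comp_apply, hX, map_smul, LinearMap.smul_apply, smul_eq_mul]
      rcases eq_or_ne k j with rfl | h
      · rfl
      · simp [Module.Basis.coord_apply, Finsupp.single_apply, h]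
    intro w
    exact LinearMap.congr_fun this w
  have h2 : X (T (b i)) = μ i • T (b i) := by
    have := LinearMap.congr_fun hT.eq (b i)
    simp only [Module.End.mul_apply] at this
    rw [this, hX, map_smul]
  refine ⟨b.coord i (T (b i)), ?_⟩
  apply b.ext_elem
  intro j
  have h3 := h1 j (T (b i))
  rw [h2, map_smul, smul_eq_mul] at h3
  rcases eq_or_ne i j with rfl | h
  · simp
  · have h4 : b.coord j (T (b i)) = 0 := by
      have : (μ i - μ j) * b.coord j (T (b i)) = 0 := by rw [sub_mul, h3, sub_self]
      exact (mul_eq_zero.1 this).resolve_left (sub_ne_zero.2 (fun e => h (hμ e)))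
    simp only [Module.Basis.coord_apply] at h4
    simp [h4, Finsupp.single_apply, h]

lemma exists_abelian {G W : Type*} [Group G] [Finite G] [AddCommGroup W] [Module ℂ W]
    [FiniteDimensional ℂ W] [Nontrivial W] (ρ : G →* Module.End ℂ W)
    (hirr : ∀ N : Submodule ℂ W, (∀ g, ∀ v ∈ N, ρ g v ∈ N) → N = ⊥ ∨ N = ⊤)
    {p : ℕ} (hp : p.Prime) (hG : IsPGroup p G) (hinj : Function.Injective ρ)
    (hdim : Module.finrank ℂ W = p) :
    ∃ H : Subgroup G, H.Normal ∧ (∀ a b : H, a * b = b * a) ∧ H.index = p := by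
  have : Fact p.Prime := ⟨hp⟩
  have hmul : ∀ (a b : G) (v : W), ρ (a * b) v = ρ a (ρ b v) := fun a b v => by
    rw [map_mul]; rfl
  have hne : ∀ g v, v ≠ 0 → ρ g v ≠ 0 := by
    intro g v hv h
    apply hv
    have : ρ (g⁻¹) (ρ g v) = v := by rw [← hmul]; simp
    rw [← this, h, map_zero]
  have hcen : ∀ z ∈ Subgroup.center G, ∃ c : ℂ, ∀ v, ρ z v = c • v := by
    intro z hz
    apply schur ρ hirr
    intro g
    have := congrArg ρ (Subgroup.mem_center_iff.1 hz g)
    rw [map_mul, map_mul] at this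
    exact this
  have hZ : Subgroup.center G ≠ ⊤ := by
    intro h
    obtain ⟨w, hw⟩ := exists_ne (0 : W)
    have htop : Submodule.span ℂ {w} = ⊤ := by
      refine (hirr _ ?_).resolve_left ?_
      · intro x u hu
        obtain ⟨c, hc⟩ := hcen x (h ▸ Subgroup.mem_top _)
        rw [hc]
        exact Submodule.smul_mem _ _ hu
      · simpa using hw
    rw [← finrank_top ℂ W, ← htop, finrank_span_singleton hw] at hdim
    exact hp.ne_one hdim.symm
  obtain ⟨x, hxZ, hx2⟩ : ∃ x : G, x ∉ Subgroup.center G ∧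
      ∀ g, g * x * g⁻¹ * x⁻¹ ∈ Subgroup.center G := by
    have : Nontrivial (G ⧸ Subgroup.center G) := QuotientGroup.nontrivial_iff.2 hZ
    have hQ := (hG.to_quotient (Subgroup.center G)).center_nontrivial
    obtain ⟨⟨y, hy⟩, hy1⟩ := exists_ne (1 : Subgroup.center (G ⧸ Subgroup.center G))
    obtain ⟨x, rfl⟩ := QuotientGroup.mk_surjective y
    refine ⟨x, ?_, ?_⟩
    · intro h
      apply hy1
      apply Subtype.ext
      exact (QuotientGroup.eq_one_iff x).2 h
    · intro g
      rw [← QuotientGroup.eq_one_iff]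
      have := Subgroup.mem_center_iff.1 hy (g : G ⧸ Subgroup.center G)
      simp only [QuotientGroup.mk_mul, QuotientGroup.mk_inv]
      rw [this]; simp
  have hz : ∀ g, ∃ c : ℂ, ∀ v, ρ (g * x * g⁻¹ * x⁻¹) v = c • v := fun g => hcen _ (hx2 g)
  choose ζ hζ using hz
  have hrel : ∀ g v, ρ g (ρ x v) = ζ g • ρ x (ρ g v) := by
    intro g v
    rw [← hζ, ← hmul, ← hmul, ← hmul]
    congr 2
    group
  obtain ⟨w, hw⟩ := exists_ne (0 : W)
  have huniq : ∀ g (c : ℂ), ρ g (ρ x w) = c • ρ x (ρ g w) → ζ g = c := by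
    intro g c h
    rw [hrel] at h
    exact smul_left_injective ℂ (hne x _ (hne g w hw)) h
  have hpow : ∀ g, ζ g ^ p = 1 := by
    intro g
    have h1 : ρ (g * x * g⁻¹ * x⁻¹) = ζ g • (1 : Module.End ℂ W) := by
      ext v; simpa using hζ g v
    have h2 : LinearMap.det (ρ (g * x * g⁻¹ * x⁻¹)) = 1 := by
      let d : G →* ℂ := (LinearMap.det : Module.End ℂ W →* ℂ).comp ρ
      change d (g * x * g⁻¹ * x⁻¹) = 1
      have e1 : d g * d g⁻¹ = 1 := by rw [← map_mul]; simp
      have e2 : d x * d x⁻¹ = 1 := by rw [← map_mul]; simp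
      rw [map_mul, map_mul, map_mul]
      linear_combination d x * d x⁻¹ * e1 + e2
    rw [h1, LinearMap.det_smul, map_one, mul_one, hdim] at h2
    exact h2
  let Z : G →* ℂ :=
    { toFun := ζ
      map_one' := huniq _ _ (by simp)
      map_mul' := fun g h => huniq _ _ (by
        rw [hmul, hrel h, map_smul, hrel g, hmul, smul_smul, mul_comm]) }
  let f : G →* ℂˣ := Z.toHomUnits
  have hf : ∀ g, ((f g : ℂˣ) : ℂ) = ζ g := fun g => rfl
  have hker : ∀ g, g ∈ f.ker ↔ ζ g = 1 := by
    intro g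
    rw [MonoidHom.mem_ker, ← Units.val_inj, hf]; rfl
  obtain ⟨g, hg⟩ : ∃ g, ζ g ≠ 1 := by
    by_contra! h
    apply hxZ
    rw [Subgroup.mem_center_iff]
    intro g
    apply hinj
    ext v
    rw [hmul, hmul, hrel, h, one_smul]
  have hprim : IsPrimitiveRoot (ζ g) p := by
    have := orderOf_eq_prime (hpow g) hg
    rw [← this]
    exact IsPrimitiveRoot.orderOf _
  refine ⟨f.ker, inferInstance, ?_, ?_⟩
  · obtain ⟨lam, hlam⟩ := Module.End.exists_eigenvalue (ρ x)
    obtain ⟨v, hv⟩ := hlam.exists_hasEigenvector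
    have hlam0 : lam ≠ 0 := by
      rintro rfl
      apply hne x v hv.2
      rw [hv.apply_eq_smul, zero_smul]
    let bb : Fin p → W := fun i => ρ (g⁻¹ ^ (i : ℕ)) v
    let μ : Fin p → ℂ := fun i => ζ g ^ (i : ℕ) * lam
    have hμ : Function.Injective μ := by
      intro i j hij
      apply Fin.ext
      exact hprim.pow_inj i.2 j.2 (mul_right_cancel₀ hlam0 hij)
    have hX : ∀ i, ρ x (bb i) = μ i • bb i := by
      intro i
      have h1 := hrel (g⁻¹ ^ (i : ℕ)) v
      have h2 : ζ (g⁻¹ ^ (i : ℕ)) * ζ g ^ (i : ℕ) = 1 := by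
        change Z _ * (Z g) ^ _ = 1
        rw [← map_pow, ← map_mul]; simp
      rw [hv.apply_eq_smul, map_smul] at h1
      change ρ x (ρ (g⁻¹ ^ (i : ℕ)) v) = (ζ g ^ (i : ℕ) * lam) • ρ (g⁻¹ ^ (i : ℕ)) v
      rw [← smul_smul, h1, smul_smul, mul_comm, h2, one_smul]
    have hli : LinearIndependent ℂ bb :=
      Module.End.eigenvectors_linearIndependent' (ρ x) μ hμ bb
        (fun i => ⟨Module.End.mem_eigenspace_iff.2 (hX i), hne _ _ hv.2⟩)
    have : Nonempty (Fin p) := ⟨⟨0, hp.pos⟩⟩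
    let b := basisOfLinearIndependentOfCardEqFinrank hli (by simp [hdim])
    have hb : ∀ i, b i = bb i := fun i => by simp [b]
    have hd : ∀ a ∈ f.ker, ∀ i, ∃ c : ℂ, ρ a (b i) = c • b i := by
      intro a ha
      apply diag_mem b μ hμ (ρ x) (fun i => by rw [hb, hX])
      ext u
      have := hrel a u
      rw [(hker a).1 ha, one_smul] at this
      exact this.symm
    intro a c
    apply Subtype.ext
    apply hinj
    apply b.ext
    intro i
    obtain ⟨s, hs⟩ := hd a a.2 i
    obtain ⟨t, ht⟩ := hd c c.2 i
    simp only [Subgroup.coe_mul]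
    rw [hmul, hmul, hs, ht, map_smul, map_smul, hs, ht, smul_comm]
  · rw [Subgroup.index_ker]
    have hle : f.range ≤ rootsOfUnity p ℂ := by
      rintro _ ⟨h, rfl⟩
      rw [mem_rootsOfUnity]
      apply Units.ext
      rw [Units.val_pow_eq_pow_val, hf, hpow, Units.val_one]
    have hdvd := Subgroup.card_dvd_of_le hle
    have hc : Nat.card (rootsOfUnity p ℂ) = p := Complex.card_rootsOfUnity p
    rw [hc] at hdvd
    refine ((Nat.dvd_prime hp).1 hdvd).resolve_left ?_
    intro h1
    apply hg
    have : f.range = ⊥ := Subgroup.card_eq_one.1 h1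
    rw [← hker, MonoidHom.mem_ker]
    have h2 : f g ∈ f.range := ⟨g, rfl⟩
    rw [this] at h2
    exact Subgroup.mem_bot.1 h2

/-- A finite `p`-group with a faithful irreducible character of degree `p` has a normal
abelian subgroup of index `p`, and `cd(G) = {1, p}`. -/
theorem faithful_degree_p (p : ℕ) (hp : p.Prime) (G : Type) [Group G] [Fintype G]
    (hpG : IsPGroup p G) (V : FDRep ℂ G) (hV : Simple V) (hfaith : repKer V = ⊥)
    (hdeg : repDegree V = p) :
    (∃ H : Subgroup G, H.Normal ∧ (∀ a b : H, a * b = b * a) ∧ H.index = p) ∧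
      cdSet G = {1, p} := by

  have hnt := simple_nontriv V hV
  have hinj : Function.Injective V.ρ := by
    rw [← MonoidHom.ker_eq_bot_iff]
    rw [eq_bot_iff, ← hfaith]
    intro g hg
    change Representation.asGroupHom V.ρ g = 1
    apply Units.ext
    exact hg
  obtain ⟨H, hn, hab, hidx⟩ := exists_abelian V.ρ (simple_inv V hV) hp hpG hinj hdeg
  refine ⟨⟨H, hn, hab, hidx⟩, ?_⟩
  ext m
  simp only [Set.mem_insert_iff, Set.mem_singleton_iff]
  constructor
  · rintro ⟨W, hW, rfl⟩
    have := simple_nontriv W hW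
    exact deg_of_abelian W.ρ (simple_inv W hW) hp H hn hab hidx
  · rintro (rfl | rfl)
    · exact one_mem_cd G
    · exact ⟨V, hV, hdeg⟩
end

section
/- Let p be a prime and let G be a finite p-group of maximal class with |G| = p^n and cd(G) = {1, p, p^2}. Then cod(G) = {p^i | 0 ≤ i ≤ n-2}. -/
open CategoryTheory

section MCHelpers

open Module

variable {G : Type} [Group G]

theorem mc_irr_mk {V : Type*} [AddCommGroup V] [Module ℂ V] (ρ : Representation ℂ G V)
    (hn : Nontrivial V)
    (h : ∀ U : Submodule ℂ V, (∀ g, ∀ v ∈ U, ρ g v ∈ U) → U = ⊥ ∨ U = ⊤) :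
    ρ.IsIrreducible where
  exists_pair_ne := by
    refine ⟨⊥, ⊤, fun he => ?_⟩
    have : (⊥ : Submodule ℂ V) = ⊤ := congrArg Subrepresentation.toSubmodule he
    exact bot_ne_top this
  eq_bot_or_eq_top a := by
    rcases h a.toSubmodule (fun g v hv => a.apply_mem_toSubmodule g hv) with h | h
    · left; exact Subrepresentation.toSubmodule_injective h
    · right; exact Subrepresentation.toSubmodule_injective h

theorem mc_irr_sub {V : Type*} [AddCommGroup V] [Module ℂ V] {ρ : Representation ℂ G V}
    (hρ : ρ.IsIrreducible) (U : Submodule ℂ V) (hU : ∀ g, ∀ v ∈ U, ρ g v ∈ U) :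
    U = ⊥ ∨ U = ⊤ := by
  rcases hρ.eq_bot_or_eq_top ⟨U, fun g v hv => hU g v hv⟩ with h | h
  · left; exact congrArg Subrepresentation.toSubmodule h
  · right; exact congrArg Subrepresentation.toSubmodule h

theorem mc_irr_nontrivial {V : Type*} [AddCommGroup V] [Module ℂ V] {ρ : Representation ℂ G V}
    (hρ : ρ.IsIrreducible) : Nontrivial V := by
  by_contra hn
  rw [not_nontrivial_iff_subsingleton] at hn
  obtain ⟨a, b, hab⟩ := hρ.exists_pair_ne
  exact hab (Subrepresentation.toSubmodule_injective (Subsingleton.elim _ _))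

theorem mc_irr_of_simple (V : FDRep ℂ G) [hV : Simple V] :
    Representation.IsIrreducible (k := ℂ) (G := G) (V := V) V.ρ := by
  refine mc_irr_mk _ ?_ ?_
  · by_contra hn
    rw [not_nontrivial_iff_subsingleton] at hn
    apply id_nonzero V
    ext x
    exact Subsingleton.elim (α := V) _ _
  · intro U hU
    let σ : Representation ℂ G U := Subrepresentation.toRepresentation (ρ := V.ρ) ⟨U, hU⟩
    let f : FDRep.of σ ⟶ V := ⟨InducedCategory.homMk (ModuleCat.ofHom U.subtype), fun g ↦ by
      ext1
      rfl⟩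
    have hf : ∀ u : U, f.hom.hom.hom u = (u : V) := fun u => rfl
    have : Mono f := by
      refine ⟨fun {Z} a b hab => ?_⟩
      ext x
      have := congrArg (fun t : Z ⟶ V => t.hom.hom.hom x) hab
      exact this
    by_cases h0 : f = 0
    · left
      rw [eq_bot_iff]
      intro x hx
      have := congrArg (fun t : FDRep.of σ ⟶ V => t.hom.hom.hom ⟨x, hx⟩) h0
      exact this
    · right
      have := isIso_of_mono_of_nonzero h0
      rw [eq_top_iff]
      intro x _
      have := congrArg (fun t : V ⟶ V => t.hom.hom.hom x) (IsIso.inv_hom_id f)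
      have h2 : ((inv f).hom.hom.hom x : U).1 = x := this
      rw [← h2]
      exact ((inv f).hom.hom.hom x : U).2

theorem mc_schur {V : Type*} [AddCommGroup V] [Module ℂ V] [FiniteDimensional ℂ V]
    {ρ : Representation ℂ G V}
    (hρ : ρ.IsIrreducible) (T : Module.End ℂ V) (hT : ∀ g, ρ g * T = T * ρ g) :
    ∃ c : ℂ, ∀ v, T v = c • v := by
  have := mc_irr_nontrivial hρ
  obtain ⟨c, hc⟩ := Module.End.exists_eigenvalue T
  refine ⟨c, ?_⟩
  rcases mc_irr_sub hρ (Module.End.eigenspace T c) (by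
    intro g v hv
    rw [Module.End.mem_eigenspace_iff] at *
    have := congrArg (fun S : Module.End ℂ V => S v) (hT g)
    simp only [Module.End.mul_apply] at this
    rw [← this, hv, map_smul]) with h | h
  · exact absurd h hc
  · intro v
    have : v ∈ Module.End.eigenspace T c := h ▸ Submodule.mem_top
    exact Module.End.mem_eigenspace_iff.1 this

theorem mc_simple_of_irr [Finite G] {V : Type} [AddCommGroup V] [Module ℂ V]
    [FiniteDimensional ℂ V] (ρ : Representation ℂ G V)
    (hρ : ρ.IsIrreducible) : Simple (FDRep.of ρ) := by
  have := mc_irr_nontrivial hρ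
  have : NeZero (Nat.card G : ℂ) := ⟨by exact_mod_cast Nat.card_pos.ne'⟩
  rw [FDRep.simple_iff_end_is_rank_one, finrank_eq_one_iff']
  refine ⟨𝟙 _, ?_, ?_⟩
  · intro h
    obtain ⟨x, hx⟩ := exists_ne (0 : V)
    exact hx (congrArg (fun t : FDRep.of ρ ⟶ FDRep.of ρ => t.hom.hom.hom x) h)
  · intro w
    obtain ⟨c, hc⟩ := mc_schur hρ (w.hom.hom.hom) (by
      intro g
      have := w.comm g
      have := congrArg (fun t : (FDRep.of ρ).V ⟶ (FDRep.of ρ).V => t.hom.hom) this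
      exact this.symm)
    refine ⟨c, ?_⟩
    ext x
    exact (hc x).symm

theorem mc_span_bound [Finite G] {V : Type*} [AddCommGroup V] [Module ℂ V]
    {ρ : Representation ℂ G V} (hρ : ρ.IsIrreducible) (A : Subgroup G) (v : V) (hv : v ≠ 0)
    (hA : ∀ a ∈ A, ∃ c : ℂ, ρ a v = c • v) : finrank ℂ V ≤ A.index := by
  let f : G ⧸ A → V := fun q => ρ q.out v
  have key : ∀ g : G, ∃ c : ℂ, ρ g v = c • f (g : G ⧸ A) := by
    intro g
    obtain ⟨h, hh⟩ := QuotientGroup.mk_out_eq_mul A g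
    obtain ⟨c, hc⟩ := hA (h : G)⁻¹ (inv_mem h.2)
    refine ⟨c, ?_⟩
    have : g = (g : G ⧸ A).out * (h : G)⁻¹ := by rw [hh]; group
    conv_lhs => rw [this, map_mul, Module.End.mul_apply, hc, map_smul]
  have htop : Submodule.span ℂ (Set.range f) = ⊤ := by
    refine (mc_irr_sub hρ _ ?_).resolve_left ?_
    · intro g w hw
      have : Submodule.span ℂ (Set.range f) ≤
          (Submodule.span ℂ (Set.range f)).comap (ρ g) := by
        rw [Submodule.span_le]
        rintro _ ⟨q, rfl⟩
        simp only [Submodule.comap_coe, Set.mem_preimage, SetLike.mem_coe, f]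
        rw [← Module.End.mul_apply, ← map_mul]
        obtain ⟨c, hc⟩ := key (g * q.out)
        rw [hc]
        exact Submodule.smul_mem _ _ (Submodule.subset_span ⟨_, rfl⟩)
      exact this hw
    · intro hb
      obtain ⟨c, hc⟩ := key 1
      have h1 : f ((1 : G) : G ⧸ A) ∈ Submodule.span ℂ (Set.range f) :=
        Submodule.subset_span ⟨_, rfl⟩
      rw [hb, Submodule.mem_bot] at h1
      rw [h1, smul_zero, map_one] at hc
      exact hv hc
  have := Fintype.ofFinite (G ⧸ A)
  have := finrank_range_le_card (R := ℂ) f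
  rw [Set.finrank, htop, finrank_top] at this
  rwa [Subgroup.index, Nat.card_eq_fintype_card]

theorem mc_common_eigen {V : Type*} [AddCommGroup V] [Module ℂ V] [FiniteDimensional ℂ V]
    [Nontrivial V] (S : Set (Module.End ℂ V)) (hS : ∀ a ∈ S, ∀ b ∈ S, a * b = b * a) :
    ∃ v : V, v ≠ 0 ∧ ∀ a ∈ S, ∃ c : ℂ, a v = c • v := by
  let P : Set (Submodule ℂ V) := {U | U ≠ ⊥ ∧ ∀ a ∈ S, ∀ v ∈ U, a v ∈ U}
  obtain ⟨U, ⟨hU0, hU⟩, hmin⟩ := (wellFounded_lt (α := Submodule ℂ V)).has_min P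
    ⟨⊤, top_ne_bot, fun _ _ _ _ => Submodule.mem_top⟩
  obtain ⟨v, hvU, hv⟩ := Submodule.exists_mem_ne_zero_of_ne_bot hU0
  refine ⟨v, hv, fun a ha => ?_⟩
  have : Nontrivial U := Submodule.nontrivial_iff_ne_bot.2 hU0
  obtain ⟨c, hc⟩ := Module.End.exists_eigenvalue (a.restrict (hU a ha))
  obtain ⟨w, hw⟩ := hc.exists_hasEigenvector
  refine ⟨c, ?_⟩
  have hmem : U ⊓ Module.End.eigenspace a c ∈ P := by
    refine ⟨?_, ?_⟩
    · intro h
      have h1 : (w : V) ∈ U ⊓ Module.End.eigenspace a c := by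
        refine ⟨w.2, ?_⟩
        rw [SetLike.mem_coe, Module.End.mem_eigenspace_iff]
        exact congrArg Subtype.val hw.apply_eq_smul
      rw [h, Submodule.mem_bot] at h1
      exact hw.2 (Subtype.ext h1)
    · rintro b hb x ⟨hx1, hx2⟩
      refine ⟨hU b hb x hx1, ?_⟩
      simp only [SetLike.mem_coe, Module.End.mem_eigenspace_iff] at *
      rw [← Module.End.mul_apply, hS a ha b hb, Module.End.mul_apply, hx2, map_smul]
  have hle : U ⊓ Module.End.eigenspace a c = U := by
    by_contra hne
    exact hmin _ hmem (lt_of_le_of_ne inf_le_left hne)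
  have : v ∈ U ⊓ Module.End.eigenspace a c := hle.symm ▸ hvU
  exact Module.End.mem_eigenspace_iff.1 this.2

theorem mc_ito [Finite G] {V : Type*} [AddCommGroup V] [Module ℂ V] [FiniteDimensional ℂ V]
    {ρ : Representation ℂ G V} (hρ : ρ.IsIrreducible) (A : Subgroup G)
    (hA : ∀ a ∈ A, ∀ b ∈ A, ρ a * ρ b = ρ b * ρ a) : finrank ℂ V ≤ A.index := by
  have := mc_irr_nontrivial hρ
  obtain ⟨v, hv, h⟩ := mc_common_eigen (ρ '' A) (by
    rintro _ ⟨a, ha, rfl⟩ _ ⟨b, hb, rfl⟩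
    exact hA a ha b hb)
  exact mc_span_bound hρ A v hv (fun a ha => h _ ⟨a, ha, rfl⟩)

end MCHelpers

section MCHelpers2

open Module commutatorElement

variable {G : Type} [Group G]

theorem mc_zeta {V : Type*} [AddCommGroup V] [Module ℂ V] [FiniteDimensional ℂ V]
    [Nontrivial V] (ρ : Representation ℂ G V) (b : G)
    (hb : ∀ g, ∃ c : ℂ, ∀ v, ρ ⁅b, g⁆ v = c • v) :
    ∃ z : G →* ℂˣ, ∀ g v, ρ b (ρ g v) = (z g : ℂ) • ρ g (ρ b v) := by
  obtain ⟨w, hw⟩ := exists_ne (0 : V)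
  have inj : ∀ g v, ρ g v = 0 → v = 0 := by
    intro g v h
    have : ρ g⁻¹ (ρ g v) = v := by
      rw [← Module.End.mul_apply, ← map_mul]; simp
    rw [h, map_zero] at this
    exact this.symm
  choose c hc using hb
  have key : ∀ g v, ρ b (ρ g v) = c g • ρ g (ρ b v) := by
    intro g v
    rw [← hc g, ← Module.End.mul_apply, ← Module.End.mul_apply, ← Module.End.mul_apply,
      ← map_mul, ← map_mul, ← map_mul]
    congr 2
    simp [commutatorElement_def, mul_assoc]
  have uniq : ∀ g (d : ℂ) v, v ≠ 0 → ρ b (ρ g v) = d • ρ g (ρ b v) → c g = d := by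
    intro g d v hv h
    rw [key] at h
    have h0 : ρ g (ρ b v) ≠ 0 := fun h => hv (inj _ _ (inj _ _ h))
    exact smul_left_injective ℂ h0 h
  let zf : G →* ℂ :=
    { toFun := c
      map_one' := uniq 1 1 w hw (by simp)
      map_mul' := by
        intro x y
        refine uniq (x * y) _ w hw ?_
        rw [map_mul, Module.End.mul_apply, key, key, map_smul, smul_smul, Module.End.mul_apply] }
  exact ⟨zf.toHomUnits, fun g v => key g v⟩

theorem mc_diag [Finite G] {p : ℕ} (hp : p.Prime) (hG : IsPGroup p G)
    {V : Type*} [AddCommGroup V] [Module ℂ V]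
    [FiniteDimensional ℂ V] [Nontrivial V] (ρ : Representation ℂ G V)
    (hd : finrank ℂ V = p) (b : G)
    (hb : ∀ g, ∃ c : ℂ, ∀ v, ρ ⁅b, g⁆ v = c • v)
    (hnc : ∃ g, ρ g * ρ b ≠ ρ b * ρ g) :
    ∃ A : Subgroup G, A.index = p ∧ ∀ x ∈ A, ∀ y ∈ A, ρ x * ρ y = ρ y * ρ x := by
  classical
  obtain ⟨z, hz⟩ := mc_zeta ρ b hb
  have inj : ∀ g v, ρ g v = 0 → v = 0 := by
    intro g v h
    have : ρ g⁻¹ (ρ g v) = v := by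
      rw [← Module.End.mul_apply, ← map_mul]; simp
    rw [h, map_zero] at this
    exact this.symm
  obtain ⟨μ, hμ⟩ := Module.End.exists_eigenvalue (ρ b)
  obtain ⟨w, hw⟩ := hμ.exists_hasEigenvector
  have hw1 : ρ b w = μ • w := hw.apply_eq_smul
  have hw0 : w ≠ 0 := hw.2
  have hμ0 : μ ≠ 0 := by
    rintro rfl
    rw [zero_smul] at hw1
    exact hw0 (inj _ _ hw1)
  have : Finite z.range := Set.finite_range z
  have : Fintype z.range := Fintype.ofFinite _
  -- eigenvectors
  choose s hs using fun r : z.range => r.2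
  let v : z.range → V := fun r => ρ (s r) w
  have hv : ∀ r, ρ b (v r) = (((r : ℂˣ) : ℂ) * μ) • v r := by
    intro r
    simp only [v]
    rw [hz, hw1, map_smul, smul_smul, hs]
  have hv0 : ∀ r, v r ≠ 0 := fun r h => hw0 (inj _ _ h)
  have hinj : Function.Injective (fun r : z.range => (((r : ℂˣ) : ℂ) * μ)) := by
    intro r r' h
    exact Subtype.ext (Units.ext (mul_right_cancel₀ hμ0 h))
  have hli : LinearIndependent ℂ v :=
    Module.End.eigenvectors_linearIndependent' (ρ b) _ hinj v
      (fun r => ⟨Module.End.mem_eigenspace_iff.2 (hv r), hv0 r⟩)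
  have hcle : Fintype.card z.range ≤ p := hd ▸ hli.fintype_card_le_finrank
  have hidx : z.ker.index = Fintype.card z.range := by
    rw [Subgroup.index_ker, Nat.card_eq_fintype_card]
  have hne : z.ker.index ≠ 1 := by
    intro h
    rw [Subgroup.index_eq_one] at h
    obtain ⟨g, hg⟩ := hnc
    apply hg
    ext x
    have : z g = 1 := by
      rw [← MonoidHom.mem_ker, h]; trivial
    have h2 := hz g x
    rw [this] at h2
    simpa using h2.symm
  have hcard : Fintype.card z.range = p := by
    have := Fact.mk hp
    obtain ⟨k, hk⟩ := hG.index z.ker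
    rw [← hidx] at hcle ⊢
    have hk0 : k ≠ 0 := by
      rintro rfl
      exact hne (by simpa using hk)
    apply le_antisymm hcle
    rw [hk]
    exact Nat.le_self_pow hk0 p
  refine ⟨z.ker, hidx.trans hcard, ?_⟩
  have : Nonempty z.range := ⟨1⟩
  let B := basisOfLinearIndependentOfCardEqFinrank hli (hcard.trans hd.symm)
  have hB : ∀ r, B r = v r := fun r => by simp [B]
  have hrepr : ∀ x r, B.repr (ρ b x) r = (((r : ℂˣ) : ℂ) * μ) * B.repr x r := by
    intro x r
    have : (B.coord r) ∘ₗ (ρ b) = (((r : ℂˣ) : ℂ) * μ) • B.coord r := by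
      apply B.ext
      intro t
      simp only [LinearMap.comp_apply, LinearMap.smul_apply, Basis.coord_apply]
      rw [hB, hv, map_smul, ← hB, B.repr_self]
      simp only [Finsupp.smul_apply, smul_eq_mul]
      by_cases htr : t = r
      · rw [htr]
      · simp [htr]
    exact congrArg (fun f : V →ₗ[ℂ] ℂ => f x) this
  have hdiag : ∀ a ∈ z.ker, ∀ r, ∃ c : ℂ, ρ a (v r) = c • v r := by
    intro a ha r
    refine ⟨B.repr (ρ a (v r)) r, ?_⟩
    have h1 : ρ b (ρ a (v r)) = (((r : ℂˣ) : ℂ) * μ) • ρ a (v r) := by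
      rw [hz, MonoidHom.mem_ker.1 ha, hv, map_smul]; simp
    apply B.repr.injective
    ext t
    by_cases htr : t = r
    · subst htr
      rw [map_smul, ← hB t, B.repr_self]
      simp
    · have h2 := hrepr (ρ a (v r)) t
      rw [h1, map_smul, Finsupp.smul_apply, smul_eq_mul] at h2
      have h3 : B.repr (ρ a (v r)) t = 0 := by
        by_contra h0
        exact htr (hinj (mul_right_cancel₀ h0 h2)).symm
      rw [h3, map_smul, ← hB r, B.repr_self]
      simp [Ne.symm htr]
  intro x hx y hy
  apply B.ext
  intro r
  obtain ⟨c, hc⟩ := hdiag x hx r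
  obtain ⟨d, hd⟩ := hdiag y hy r
  rw [hB, Module.End.mul_apply, Module.End.mul_apply, hc, hd, map_smul, map_smul, hc, hd,
    smul_smul, smul_smul, mul_comm]

theorem mc_compare [Finite G] {p : ℕ} (hp : p.Prime) (hG : IsPGroup p G)
    {V : Type*} [AddCommGroup V] [Module ℂ V] [FiniteDimensional ℂ V]
    {ρ : Representation ℂ G V} (hρ : ρ.IsIrreducible) (hd : finrank ℂ V = p)
    {W : Type*} [AddCommGroup W] [Module ℂ W] [FiniteDimensional ℂ W]
    {σ : Representation ℂ G W} (hσ : σ.IsIrreducible) (hker : ∀ g, ρ g = 1 → σ g = 1) :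
    finrank ℂ W ≤ p := by
  classical
  have := Fact.mk hp
  have := mc_irr_nontrivial hρ
  obtain ⟨c, hc⟩ := (hG.isNilpotent).nilpotent
  have hex : ∃ m, ∃ b ∈ Subgroup.upperCentralSeries G m, ¬ ∃ c : ℂ, ∀ v, ρ b v = c • v := by
    by_contra hcon
    push Not at hcon
    obtain ⟨w, hw⟩ := exists_ne (0 : V)
    have := mc_span_bound hρ ⊤ w hw (fun a _ => by
      obtain ⟨d, hd⟩ := hcon c a (by rw [hc]; trivial)
      exact ⟨d, hd w⟩)
    rw [Subgroup.index_top, hd] at this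
    exact absurd hp.one_lt (by omega)
  obtain ⟨b, hbm, hb⟩ := Nat.find_spec hex
  have hmin := fun k hk => Nat.find_min (m := k) hex hk
  generalize Nat.find hex = m at *
  rcases m with _ | m
  · rw [Subgroup.upperCentralSeries_zero, Subgroup.mem_bot] at hbm
    exact absurd ⟨1, by simp [hbm]⟩ hb
  have hscal : ∀ g, ∃ c : ℂ, ∀ v, ρ ⁅b, g⁆ v = c • v := by
    intro g
    by_contra hcon
    exact hmin m (Nat.lt_succ_self m) ⟨_, Subgroup.mem_upperCentralSeries_succ_iff.1 hbm g, hcon⟩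
  obtain ⟨A, hA, hcomm⟩ := mc_diag hp hG ρ hd b hscal (by
    by_contra hcon
    push Not at hcon
    exact hb (mc_schur hρ (ρ b) hcon))
  rw [← hA]
  refine mc_ito hσ A (fun x hx y hy => ?_)
  have h1 : ρ ⁅x, y⁆ = 1 := by
    rw [commutatorElement_def, map_mul, map_mul, map_mul, hcomm x hx y hy, ← map_mul, ← map_mul, ← map_mul]
    simp
  have h2 := hker _ h1
  have : x * y = ⁅x, y⁆ * (y * x) := by simp [commutatorElement_def, mul_assoc]
  rw [← map_mul, this, map_mul, h2, one_mul, map_mul]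

theorem mc_exists [Finite G] (N : Subgroup G) [N.Normal] (g : G) (hg : g ∉ N) :
    ∃ V : FDRep ℂ G, Simple V ∧ (∀ x ∈ N, V.ρ x = 1) ∧ V.ρ g ≠ 1 := by
  let Q := G ⧸ N
  let R := MonoidAlgebra ℂ Q
  have : NeZero (Nat.card Q : ℂ) := ⟨by exact_mod_cast Nat.card_pos.ne'⟩
  have hss : IsSemisimpleRing R := inferInstance
  have hj : Ring.jacobson R = ⊥ := IsSemisimpleRing.jacobson_eq_bot R
  let r : R := MonoidAlgebra.of ℂ Q (g : Q) - 1
  have hr : r ≠ 0 := by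
    intro h
    rw [sub_eq_zero, ← map_one (MonoidAlgebra.of ℂ Q)] at h
    have := MonoidAlgebra.of_injective h
    rw [QuotientGroup.eq_one_iff] at this
    exact hg this
  have hr2 : r ∉ Ring.jacobson R := by rw [hj]; exact hr
  obtain ⟨I, hI, hrI⟩ : ∃ I : Submodule R R, IsCoatom I ∧ r ∉ I := by
    by_contra hcon
    push Not at hcon
    apply hr2
    rw [Ring.jacobson, Module.jacobson, Submodule.mem_sInf]
    exact fun I hI => hcon I hI
  let M := R ⧸ I
  have hM : IsSimpleModule R M := isSimpleModule_iff_isCoatom.2 hI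
  have : Module.Finite ℂ R := inferInstance
  have : Module.Finite ℂ M := inferInstance
  let ρ : Representation ℂ G M :=
    ((Algebra.lsmul ℂ ℂ M : R →ₐ[ℂ] Module.End ℂ M) : R →* Module.End ℂ M).comp
      ((MonoidAlgebra.of ℂ Q).comp (QuotientGroup.mk' N))
  have hρ : ∀ x (m : M), ρ x m = (MonoidAlgebra.of ℂ Q (x : Q) : R) • m := fun x m => rfl
  have hirr : ρ.IsIrreducible := by
    refine mc_irr_mk ρ (IsSimpleModule.nontrivial R M) ?_
    intro U hU
    let U' : Submodule R M :=
      { U with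
        smul_mem' := by
          intro a m hm
          induction a using MonoidAlgebra.induction_on with
          | of q =>
            obtain ⟨x, rfl⟩ := QuotientGroup.mk_surjective q
            exact hU x m hm
          | add a b ha hb => rw [add_smul]; exact U.add_mem ha hb
          | smul c a ha => rw [smul_assoc]; exact U.smul_mem c ha }
    have hmem : ∀ x, x ∈ U' ↔ x ∈ U := fun x => Iff.rfl
    rcases eq_bot_or_eq_top U' with h | h
    · left; ext x; rw [← hmem, h]; simp
    · right; ext x; rw [← hmem, h]; simp
  have h1 : ∀ x ∈ N, ρ x = 1 := by
    intro x hx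
    have hx1 : (x : Q) = 1 := (QuotientGroup.eq_one_iff x).2 hx
    refine LinearMap.ext fun m => ?_
    rw [hρ, hx1, map_one, one_smul, Module.End.one_apply]
  have h2 : ρ g ≠ 1 := by
    intro h
    have h1 := congrArg (fun f : Module.End ℂ M => f (Submodule.Quotient.mk (1 : R))) h
    simp only [hρ] at h1
    rw [← Submodule.Quotient.mk_smul, smul_eq_mul, mul_one, Module.End.one_apply,
      Submodule.Quotient.eq] at h1
    exact hrI h1
  exact ⟨FDRep.of ρ, mc_simple_of_irr ρ hirr, h1, h2⟩

end MCHelpers2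

section MCHelpers3

open Module commutatorElement

variable {G : Type} [Group G]

theorem mc_lt_card [Finite G] {p n : ℕ} (hp : p.Prime) (hcard : Nat.card G = p ^ n)
    {H K : Subgroup G} (h : H < K) : p * Nat.card H ≤ Nat.card K := by
  obtain ⟨c, hc⟩ := Subgroup.card_dvd_of_le h.le
  have hKd : Nat.card K ∣ p ^ n := hcard ▸ Subgroup.card_subgroup_dvd_card K
  have hcd : c ∣ p ^ n := (Dvd.intro_left _ hc.symm).trans hKd
  obtain ⟨k, -, rfl⟩ := (Nat.dvd_prime_pow hp).1 hcd
  have hk : k ≠ 0 := by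
    rintro rfl
    rw [pow_zero, mul_one] at hc
    exact h.ne (Subgroup.eq_of_le_of_card_ge h.le hc.le)
  rw [hc, mul_comm]
  exact Nat.mul_le_mul_left _ (Nat.le_self_pow hk p)

theorem mc_comm_swap {N : Subgroup G} {x y : G} (h : ⁅x, y⁆ ∈ N) : ⁅y, x⁆ ∈ N := by
  rw [← commutatorElement_inv]
  exact inv_mem h

/-- The top part of the upper central series is large. -/
theorem mc_top_index [Finite G] {p n : ℕ} (hp : p.Prime) (hcard : Nat.card G = p ^ n) (hn : 2 ≤ n)
    (m : ℕ) (hm : Subgroup.upperCentralSeries G (m + 1) ≠ ⊤) :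
    Nat.card (Subgroup.upperCentralSeries G (m + 1)) ≤ p ^ (n - 2) := by
  by_contra hlt
  push Not at hlt
  obtain ⟨g, hg⟩ : ∃ g, g ∉ Subgroup.upperCentralSeries G (m + 1) := by
    by_contra hcon
    push Not at hcon
    exact hm (eq_top_iff.2 fun x _ => hcon x)
  obtain ⟨e, he, hce⟩ := (Nat.dvd_prime_pow hp).1
    (hcard ▸ Subgroup.card_subgroup_dvd_card (Subgroup.upperCentralSeries G (m + 1)))
  rw [hce] at hlt
  have hne := (Nat.pow_lt_pow_iff_right hp.one_lt).1 hlt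
  let C : Subgroup G := (Subgroup.centralizer
    {(QuotientGroup.mk' (Subgroup.upperCentralSeries G m) g)}).comap
      (QuotientGroup.mk' (Subgroup.upperCentralSeries G m))
  have hC : ∀ x, x ∈ C ↔ ⁅x, g⁆ ∈ Subgroup.upperCentralSeries G m := by
    intro x
    rw [Subgroup.mem_comap, Subgroup.mem_centralizer_singleton_iff, ← QuotientGroup.eq_one_iff]
    rw [← commutatorElement_eq_one_iff_mul_comm]
    exact Iff.rfl
  have hlt2 : Subgroup.upperCentralSeries G (m + 1) < C := by
    refine lt_of_le_of_ne (fun x hx => (hC x).2 (hx g)) ?_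
    intro heq
    apply hg
    rw [heq, hC, commutatorElement_self]
    exact one_mem _
  have h1 := mc_lt_card hp hcard hlt2
  have h2 : Nat.card C = Nat.card G := by
    apply le_antisymm (Subgroup.card_le_card_group C)
    rw [hcard]
    refine le_trans ?_ h1
    rw [hce, ← pow_succ']
    exact Nat.pow_le_pow_right hp.pos (by omega)
  have h3 : C = ⊤ := Subgroup.eq_top_of_card_eq C h2
  apply hg
  intro y
  exact mc_comm_swap ((hC y).1 (h3 ▸ Subgroup.mem_top y))

theorem mc_nilClass_top [Finite G] {p n : ℕ} (hp : p.Prime) (hcard : Nat.card G = p ^ n)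
    (hmax : nilClass G = n - 1) : Subgroup.upperCentralSeries G (n - 1) = ⊤ := by
  have := Fact.mk hp
  obtain ⟨c, hc⟩ := ((IsPGroup.of_card hcard).isNilpotent).nilpotent
  have : nilClass G ∈ {n | Subgroup.upperCentralSeries G n = ⊤} := Nat.sInf_mem ⟨c, hc⟩
  rw [hmax] at this
  exact this

theorem mc_nilClass_ne {n : ℕ} (hmax : nilClass G = n - 1) {j : ℕ} (hj : j < n - 1) :
    Subgroup.upperCentralSeries G j ≠ ⊤ := by
  intro h
  have : nilClass G ≤ j := Nat.sInf_le h
  omega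

theorem mc_Z_lt [Finite G] {p n : ℕ} (hp : p.Prime) (hcard : Nat.card G = p ^ n)
    (hmax : nilClass G = n - 1) {j : ℕ} (hj : j < n - 1) :
    Subgroup.upperCentralSeries G j < Subgroup.upperCentralSeries G (j + 1) := by
  refine lt_of_le_of_ne (Subgroup.upperCentralSeries_mono G (Nat.le_succ j)) ?_
  intro heq
  have hst : ∀ k, Subgroup.upperCentralSeries G (j + k) = Subgroup.upperCentralSeries G j := by
    intro k
    induction k with
    | zero => rfl
    | succ k ih =>
      ext x
      rw [← add_assoc, Subgroup.mem_upperCentralSeries_succ_iff, ih]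
      conv_rhs => rw [heq]
      rfl
  have := hst (n - 1 - j)
  rw [Nat.add_sub_cancel' hj.le, mc_nilClass_top hp hcard hmax] at this
  exact mc_nilClass_ne hmax hj this.symm

theorem mc_Z_card [Finite G] {p n : ℕ} (hp : p.Prime) (hcard : Nat.card G = p ^ n)
    (hmax : nilClass G = n - 1) (hn : 3 ≤ n) {j : ℕ} (hj : j ≤ n - 2) :
    Nat.card (Subgroup.upperCentralSeries G j) = p ^ j := by
  apply le_antisymm
  · have key : ∀ i, i ≤ n - 2 → p ^ i * Nat.card (Subgroup.upperCentralSeries G (n - 2 - i)) ≤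
        p ^ (n - 2) := by
      intro i
      induction i with
      | zero =>
        intro _
        obtain ⟨m, hm⟩ : ∃ m, n - 2 = m + 1 := ⟨n - 3, by omega⟩
        rw [pow_zero, one_mul, Nat.sub_zero]
        have := mc_top_index hp hcard (by omega) m (mc_nilClass_ne hmax (by omega))
        rwa [← hm] at this
      | succ i ih =>
        intro hi
        refine le_trans ?_ (ih (by omega))
        have h1 := mc_lt_card hp hcard (mc_Z_lt hp hcard hmax (j := n - 2 - (i + 1)) (by omega))
        rw [show n - 2 - (i + 1) + 1 = n - 2 - i by omega] at h1
        rw [pow_succ, mul_assoc]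
        exact Nat.mul_le_mul_left _ h1
    have h := key (n - 2 - j) (by omega)
    rw [show n - 2 - (n - 2 - j) = j by omega] at h
    have h2 : p ^ (n - 2) = p ^ (n - 2 - j) * p ^ j := by
      rw [← pow_add]; congr 1; omega
    rw [h2] at h
    exact Nat.le_of_mul_le_mul_left h (pow_pos hp.pos _)
  · induction j with
    | zero => rw [pow_zero]; exact Nat.card_pos
    | succ j ih =>
      rw [pow_succ']
      exact le_trans (Nat.mul_le_mul_left _ (ih (by omega)))
        (mc_lt_card hp hcard (mc_Z_lt hp hcard hmax (by omega)))

theorem mc_meet [Finite G] {p n : ℕ} (hp : p.Prime) (hcard : Nat.card G = p ^ n)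
    (K : Subgroup G) [hK : K.Normal] (j : ℕ) (h : ¬ K ≤ Subgroup.upperCentralSeries G j) :
    ∃ x ∈ K, x ∈ Subgroup.upperCentralSeries G (j + 1) ∧
      x ∉ Subgroup.upperCentralSeries G j := by
  classical
  have := Fact.mk hp
  obtain ⟨c, hc⟩ := ((IsPGroup.of_card hcard).isNilpotent).nilpotent
  have hex : ∃ m, ∃ x ∈ K, x ∈ Subgroup.upperCentralSeries G m ∧
      x ∉ Subgroup.upperCentralSeries G j := by
    obtain ⟨x, hx, hx2⟩ := SetLike.not_le_iff_exists.1 h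
    exact ⟨c, x, hx, by rw [hc]; trivial, hx2⟩
  obtain ⟨x, hxK, hxm, hxj⟩ := Nat.find_spec hex
  have hmin := fun k hk => Nat.find_min (m := k) hex hk
  generalize Nat.find hex = m at *
  refine ⟨x, hxK, ?_, hxj⟩
  rcases m with _ | m
  · exact absurd (Subgroup.upperCentralSeries_mono G (Nat.zero_le j) hxm) hxj
  · intro y
    by_contra hcon
    refine hmin m (Nat.lt_succ_self m) ⟨⁅x, y⁆, ?_, hxm y, hcon⟩
    have : ⁅x, y⁆ = x * (y * x⁻¹ * y⁻¹) := by simp [commutatorElement_def, mul_assoc]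
    rw [this]
    exact K.mul_mem hxK (hK.conj_mem _ (inv_mem hxK) y)

theorem mc_mem_repKer (V : FDRep ℂ G) (g : G) : g ∈ repKer V ↔ V.ρ g = 1 := by
  rw [repKer, MonoidHom.mem_ker, ← Units.val_inj, Representation.asGroupHom_apply]
  rfl

instance mc_repKer_normal (V : FDRep ℂ G) : (repKer V).Normal := by
  unfold repKer; infer_instance

theorem mc_faithful [Finite G] {p n : ℕ} (hp : p.Prime) (hcard : Nat.card G = p ^ n)
    (hmax : nilClass G = n - 1) {j : ℕ} (hj : j + 3 ≤ n) :
    ∃ V : FDRep ℂ G, Simple V ∧ repKer V = Subgroup.upperCentralSeries G j := by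
  obtain ⟨g, hg1, hg⟩ := SetLike.exists_of_lt (mc_Z_lt hp hcard hmax (j := j) (by omega))
  obtain ⟨V, hV, h1, h2⟩ := mc_exists (Subgroup.upperCentralSeries G j) g hg
  refine ⟨V, hV, ?_⟩
  have hle : Subgroup.upperCentralSeries G j ≤ repKer V :=
    fun x hx => (mc_mem_repKer V x).2 (h1 x hx)
  refine le_antisymm ?_ hle
  by_contra hcon
  obtain ⟨x, hxK, hx1, hx2⟩ := mc_meet hp hcard (repKer V) j hcon
  have hlt : Subgroup.upperCentralSeries G j <
      repKer V ⊓ Subgroup.upperCentralSeries G (j + 1) := by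
    refine lt_of_le_of_ne (le_inf hle (Subgroup.upperCentralSeries_mono G (Nat.le_succ j))) ?_
    intro heq
    exact hx2 (heq ▸ ⟨hxK, hx1⟩)
  have h3 := mc_lt_card hp hcard hlt
  rw [mc_Z_card hp hcard hmax (by omega) (by omega), ← pow_succ',
    ← mc_Z_card hp hcard hmax (by omega) (show j + 1 ≤ n - 2 by omega)] at h3
  have h4 := Subgroup.eq_of_le_of_card_ge inf_le_right h3
  have h5 : g ∈ repKer V ⊓ Subgroup.upperCentralSeries G (j + 1) := h4.symm ▸ hg1
  exact h2 ((mc_mem_repKer V g).1 h5.1)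

theorem mc_deg_one (V : FDRep ℂ G) (h : repDegree V = 1) (x y : G) : ⁅x, y⁆ ∈ repKer V := by
  rw [mc_mem_repKer]
  obtain ⟨v, hv, hsp⟩ := finrank_eq_one_iff'.1 h
  have hs : ∀ g, ∃ c : ℂ, ∀ w, V.ρ g w = c • w := by
    intro g
    obtain ⟨c, hc⟩ := hsp (V.ρ g v)
    refine ⟨c, fun w => ?_⟩
    obtain ⟨d, rfl⟩ := hsp w
    rw [map_smul, ← hc, smul_comm]
  have hcomm : V.ρ x * V.ρ y = V.ρ y * V.ρ x := by
    obtain ⟨c, hc⟩ := hs x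
    obtain ⟨d, hd⟩ := hs y
    refine LinearMap.ext fun w => ?_
    rw [Module.End.mul_apply, Module.End.mul_apply, hc, hd, hc, hd, smul_comm]
  rw [commutatorElement_def, map_mul, map_mul, map_mul, hcomm, ← map_mul, ← map_mul, ← map_mul]
  simp

theorem mc_ito_rep [Finite G] (V : FDRep ℂ G) (hV : Simple V) (A : Subgroup G)
    (hA : ∀ a ∈ A, ∀ b ∈ A, ⁅a, b⁆ ∈ repKer V) : repDegree V ≤ A.index := by
  refine mc_ito (mc_irr_of_simple V) A ?_
  intro a ha b hb
  have := (mc_mem_repKer V _).1 (hA a ha b hb)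
  have h2 : a * b = ⁅a, b⁆ * (b * a) := by simp [commutatorElement_def, mul_assoc]
  rw [← map_mul, h2, map_mul, this, one_mul, map_mul]

theorem mc_compare_rep [Finite G] {p n : ℕ} (hp : p.Prime) (hcard : Nat.card G = p ^ n)
    (V W : FDRep ℂ G) (hV : Simple V) (hW : Simple W) (hd : repDegree V = p)
    (hker : repKer V ≤ repKer W) : repDegree W ≤ p :=
  mc_compare hp (IsPGroup.of_card hcard) (mc_irr_of_simple V) hd (mc_irr_of_simple W)
    (fun g hg => (mc_mem_repKer W g).1 (hker ((mc_mem_repKer V g).2 hg)))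

theorem mc_deg_pos (V : FDRep ℂ G) (hV : Simple V) : 0 < repDegree V := by
  have := mc_irr_nontrivial (mc_irr_of_simple V)
  exact finrank_pos (R := ℂ) (M := V)

theorem mc_four_le [Finite G] {p n : ℕ} (hp : p.Prime) (hcard : Nat.card G = p ^ n)
    (W : FDRep ℂ G) (hW : Simple W) (hd : repDegree W = p ^ 2) : 4 ≤ n := by
  have := Fact.mk hp
  by_contra hn
  have hlt : p < p ^ 2 := by nlinarith [hp.one_lt]
  rcases Nat.lt_or_ge n 2 with h | h
  · have h1 := mc_ito_rep W hW ⊥ (by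
      intro a ha b hb
      rw [Subgroup.mem_bot] at ha
      rw [ha, commutatorElement_one_left]; exact one_mem _)
    rw [Subgroup.index_bot, hcard, hd] at h1
    exact absurd ((Nat.pow_le_pow_iff_right hp.one_lt).1 h1) (by omega)
  · obtain ⟨A, hA⟩ := Sylow.exists_subgroup_card_pow_prime (G := G) p (n := 2)
      (hcard ▸ pow_dvd_pow p h)
    have h1 := mc_ito_rep W hW A (by
      intro a ha b hb
      have hm : IsMulCommutative A := IsPGroup.isMulCommutative_of_card_eq_prime_sq hA
      have hc := hm.is_comm.comm (⟨a, ha⟩ : A) ⟨b, hb⟩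
      have hc2 : a * b = b * a := congrArg Subtype.val hc
      rw [commutatorElement_eq_one_iff_mul_comm.2 hc2]
      exact one_mem _)
    have h2 := A.card_mul_index
    rw [hA, hcard, show n = 2 + (n - 2) by omega, pow_add] at h2
    have h3 := Nat.eq_of_mul_eq_mul_left (pow_pos hp.pos 2) h2
    rw [h3, hd] at h1
    exact absurd ((Nat.pow_le_pow_iff_right hp.one_lt).1 h1) (by omega)

end MCHelpers3

open scoped commutatorElement

/-- A maximal class `p`-group of order `p^n` with `cd(G) = {1, p, p^2}` has
`cod(G) = {p^i | 0 ≤ i ≤ n-2}`. -/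
theorem maximal_class_cd_one_p_psq (p n : ℕ) (hp : p.Prime) (G : Type) [Group G] [Fintype G]
    (hcard : Fintype.card G = p ^ n) (hmax : nilClass G = n - 1)
    (hcd : cdSet G = {1, p, p ^ 2}) :
    codSet G = {m | ∃ i ≤ n - 2, m = p ^ i} := by
  classical
  have hc : Nat.card G = p ^ n := by rw [Nat.card_eq_fintype_card, hcard]
  obtain ⟨W, hW, hWd⟩ : p ^ 2 ∈ cdSet G := by rw [hcd]; simp
  have hn := mc_four_le hp hc W hW hWd
  have hpp : p < p ^ 2 := by nlinarith [hp.one_lt]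
  have hdeg : ∀ V : FDRep ℂ G, Simple V →
      repDegree V = 1 ∨ repDegree V = p ∨ repDegree V = p ^ 2 := by
    intro V hV
    have : repDegree V ∈ cdSet G := ⟨V, hV, rfl⟩
    rw [hcd] at this
    simpa using this
  have hle : ∀ V : FDRep ℂ G, Simple V → repDegree V ≤ (repKer V).index := by
    intro V hV
    refine mc_ito_rep V hV _ (fun a ha b hb => ?_)
    rw [commutatorElement_def]
    exact mul_mem (mul_mem (mul_mem ha hb) (inv_mem ha)) (inv_mem hb)
  apply Set.Subset.antisymm
  · rintro m ⟨V, hV, rfl⟩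
    obtain ⟨k, hkn, hk⟩ := (Nat.dvd_prime_pow hp).1 (hc ▸ (repKer V).index_dvd_card)
    have hKc : Nat.card (repKer V) = p ^ (n - k) := by
      have := (repKer V).card_mul_index
      rw [hk, hc, show n = (n - k) + k by omega, pow_add] at this
      rw [Nat.eq_of_mul_eq_mul_right (pow_pos hp.pos k) this]
    have hVle := hle V hV
    rw [hk] at hVle
    rcases hdeg V hV with h | h | h
    · refine ⟨k, ?_, by rw [codegree, hk, h, Nat.div_one]⟩
      by_contra hcon
      have hKZ : repKer V ≤ Subgroup.upperCentralSeries G 1 := by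
        by_cases hb : repKer V ≤ Subgroup.upperCentralSeries G 0
        · exact hb.trans (Subgroup.upperCentralSeries_mono G (Nat.zero_le 1))
        · obtain ⟨x, hxK, hx1, hx0⟩ := mc_meet hp hc (repKer V) 0 hb
          have hlt : (⊥ : Subgroup G) < repKer V ⊓ Subgroup.upperCentralSeries G 1 := by
            refine lt_of_le_of_ne bot_le (fun heq => hx0 ?_)
            have hx : x ∈ repKer V ⊓ Subgroup.upperCentralSeries G 1 := ⟨hxK, hx1⟩
            rw [← heq] at hx
            exact hx
          have h1 := mc_lt_card hp hc hlt
          rw [Subgroup.card_bot, mul_one] at h1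
          have h2 : Nat.card (repKer V) ≤ p := by
            rw [hKc]
            calc p ^ (n - k) ≤ p ^ 1 := Nat.pow_le_pow_right hp.pos (by omega)
              _ = p := pow_one p
          exact inf_eq_left.1 (Subgroup.eq_of_le_of_card_ge inf_le_left (h2.trans h1))
      refine mc_nilClass_ne hmax (j := 2) (by omega) (eq_top_iff.2 fun x _ => ?_)
      exact fun y => hKZ (mc_deg_one V h x y)
    · have hkn' : k ≠ n := by
        rintro rfl
        rw [Nat.sub_self, pow_zero, Subgroup.card_eq_one] at hKc
        have := mc_compare_rep hp hc V W hV hW h (hKc ▸ bot_le)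
        omega
      have hk1 : 1 ≤ k := by
        rw [h] at hVle
        rcases k with _ | k
        · exact absurd hp.one_lt (by simpa using hVle)
        · omega
      refine ⟨k - 1, by omega, ?_⟩
      rw [codegree, hk, h, ← Nat.pow_div hk1 hp.pos, pow_one]
    · have hk2 : 2 ≤ k := by
        rw [h] at hVle
        exact (Nat.pow_le_pow_iff_right hp.one_lt).1 hVle
      refine ⟨k - 2, by omega, ?_⟩
      rw [codegree, hk, h, ← Nat.pow_div hk2 hp.pos]
  · rintro m ⟨i, hi, rfl⟩
    have hidx : ∀ (V : FDRep ℂ G) (j : ℕ), j ≤ n - 2 →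
        repKer V = Subgroup.upperCentralSeries G j → (repKer V).index = p ^ (n - j) := by
      intro V j hj hV
      have := (repKer V).card_mul_index
      rw [hV, mc_Z_card hp hc hmax (by omega) hj, hc] at this
      rw [hV]
      apply Nat.eq_of_mul_eq_mul_left (pow_pos hp.pos j)
      rw [this, ← pow_add]
      congr 1
      omega
    have hne1 : ∀ (V : FDRep ℂ G) (j : ℕ), j + 3 ≤ n →
        repKer V = Subgroup.upperCentralSeries G j → repDegree V ≠ 1 := by
      intro V j hj hV h1
      refine mc_nilClass_ne hmax (j := j + 1) (by omega) (eq_top_iff.2 fun x _ => ?_)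
      exact fun y => hV.le (mc_deg_one V h1 x y)
    have hab : ∀ (N : Subgroup G) [N.Normal] (V : FDRep ℂ G), Simple V →
        (∀ x y : G, ⁅x, y⁆ ∈ N) → N ≤ repKer V → codegree V = (repKer V).index := by
      intro N _ V hV h1 h2
      have h3 := mc_ito_rep V hV ⊤ (fun a _ b _ => h2 (h1 a b))
      rw [Subgroup.index_top] at h3
      have h4 := mc_deg_pos V hV
      rw [codegree, show repDegree V = 1 by omega, Nat.div_one]
    rcases Nat.lt_or_ge i 2 with hi2 | hi2
    · have := Fact.mk hp
      obtain ⟨N, hN⟩ := Sylow.exists_subgroup_card_pow_prime (G := G) p (n := n - 1)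
        (hc ▸ pow_dvd_pow p (by omega))
      have hNi : N.index = p := by
        have := N.card_mul_index
        rw [hN, hc] at this
        apply Nat.eq_of_mul_eq_mul_left (pow_pos hp.pos (n - 1))
        rw [this, ← pow_succ]
        congr 1
        omega
      have hNn : N.Normal := by
        apply Subgroup.normal_of_index_eq_minFac_card
        rw [hNi, hc, hp.pow_minFac (by omega)]
      have hNc : ∀ x y : G, ⁅x, y⁆ ∈ N := by
        intro x y
        have hQ : Nat.card (G ⧸ N) = p := hNi
        have hcyc : IsCyclic (G ⧸ N) := isCyclic_of_prime_card hQ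
        rw [← QuotientGroup.eq_one_iff]
        have : (x : G ⧸ N) * (y : G ⧸ N) = y * x := by
          obtain ⟨g, hg⟩ := hcyc.exists_generator
          obtain ⟨a, ha⟩ := hg x
          obtain ⟨b, hb⟩ := hg y
          simp only at ha hb
          rw [← ha, ← hb, ← zpow_add, ← zpow_add, add_comm]
        exact commutatorElement_eq_one_iff_mul_comm.2 this
      obtain ⟨g, hg⟩ : ∃ g, g ∉ N := by
        by_contra hcon
        push Not at hcon
        have : N = ⊤ := eq_top_iff.2 fun x _ => hcon x
        rw [this, Subgroup.index_top] at hNi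
        exact hp.one_lt.ne hNi
      obtain ⟨V, hV, h1, h2⟩ := mc_exists N g hg
      have hNV : N ≤ repKer V := fun x hx => (mc_mem_repKer V x).2 (h1 x hx)
      have hVi : (repKer V).index = p := by
        have hd := Subgroup.index_dvd_of_le hNV
        rw [hNi] at hd
        rcases (Nat.dvd_prime hp).1 hd with h | h
        · rw [Subgroup.index_eq_one] at h
          exact absurd ((mc_mem_repKer V g).1 (h ▸ Subgroup.mem_top g)) h2
        · exact h
      have hi01 : i = 0 ∨ i = 1 := by omega
      rcases hi01 with rfl | rfl
      · let τ : Representation ℂ G ℂ := 1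
        have hτ : τ.IsIrreducible := by
          refine mc_irr_mk τ inferInstance (fun U _ => ?_)
          exact eq_bot_or_eq_top (α := Ideal ℂ) U
        have hker : repKer (FDRep.of τ) = ⊤ := by
          rw [eq_top_iff]
          intro x _
          rw [mc_mem_repKer]
          rfl
        refine ⟨FDRep.of τ, mc_simple_of_irr τ hτ, ?_⟩
        rw [hab N _ (mc_simple_of_irr τ hτ) hNc (hker ▸ le_top), hker, Subgroup.index_top, pow_zero]
      · refine ⟨V, hV, ?_⟩
        rw [hab N V hV hNc hNV, hVi, pow_one]
    · obtain ⟨V, hV, hVk⟩ := mc_faithful hp hc hmax (j := n - (i + 1)) (by omega)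
      obtain ⟨V', hV', hVk'⟩ := mc_faithful hp hc hmax (j := n - (i + 2)) (by omega)
      have hi1 := hidx V _ (by omega) hVk
      have hi2 := hidx V' _ (by omega) hVk'
      rw [show n - (n - (i + 1)) = i + 1 by omega] at hi1
      rw [show n - (n - (i + 2)) = i + 2 by omega] at hi2
      rcases hdeg V hV with h | h | h
      · exact absurd h (hne1 V _ (by omega) hVk)
      · refine ⟨V, hV, ?_⟩
        rw [codegree, hi1, h, pow_succ, Nat.mul_div_cancel _ hp.pos]
      · refine ⟨V', hV', ?_⟩
        rcases hdeg V' hV' with h' | h' | h'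
        · exact absurd h' (hne1 V' _ (by omega) hVk')
        · have := mc_compare_rep hp hc V' V hV' hV h' (by
            rw [hVk, hVk']
            exact Subgroup.upperCentralSeries_mono G (by omega))
          omega
        · rw [codegree, hi2, h', pow_add, Nat.mul_div_cancel _ (pow_pos hp.pos 2)]
end

section
/- Let p be a prime and let G be a finite p-group of maximal class with |G| ≥ p^3. Then p^2 ∈ cod(G). -/
open CategoryTheory

open scoped commutatorElement

/-- From a representation killing `N` but not `m0`, extract an irreducible one. -/
lemma exists_irr_aux {G : Type} [Group G] [Fintype G] (N : Subgroup G) (m0 : G) (d : ℕ) :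
    ∀ (V : Type) [AddCommGroup V] [Module ℂ V] [FiniteDimensional ℂ V]
      (ρ : Representation ℂ G V), Module.finrank ℂ V = d → (∀ n ∈ N, ρ n = 1) → ρ m0 ≠ 1 →
    ∃ (U : Type) (_ : AddCommGroup U) (_ : Module ℂ U) (_ : FiniteDimensional ℂ U)
      (σ : Representation ℂ G U), σ.IsIrreducible ∧ (∀ n ∈ N, σ n = 1) ∧ σ m0 ≠ 1 := by
  induction d using Nat.strong_induction_on with
  | _ d ih =>
  intro V _ _ _ ρ hd hN hm
  by_cases hirr : ρ.IsIrreducible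
  · exact ⟨V, _, _, inferInstance, ρ, hirr, hN, hm⟩
  by_contra hcon
  have key : ∀ P : Subrepresentation ρ, P ≠ ⊤ → ∀ x ∈ P.toSubmodule, ρ m0 x = x := by
    intro P hP x hx
    by_contra hx'
    apply hcon
    refine ih (Module.finrank ℂ P.toSubmodule) ?_ P.toSubmodule P.toRepresentation rfl ?_ ?_
    · rw [← hd]
      apply Submodule.finrank_lt
      intro h
      exact hP (Subrepresentation.toSubmodule_injective h)
    · intro n hn
      ext y
      have : ρ n y = y := by rw [hN n hn]; rfl
      exact this
    · intro h
      have := congrArg Subtype.val (LinearMap.congr_fun h ⟨x, hx⟩)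
      exact hx' this
  have : ComplementedLattice (Subrepresentation ρ) :=
    inferInstanceAs (Representation.IsSemisimpleRepresentation ρ)
  apply hirr
  have hnt : Nontrivial (Subrepresentation ρ) := by
    refine ⟨⊥, ⊤, fun h => hm ?_⟩
    ext x
    have hx : x ∈ (⊤ : Subrepresentation ρ).toSubmodule := Submodule.mem_top
    rw [← h] at hx
    have : x = 0 := hx
    simp [this]
  refine { eq_bot_or_eq_top := fun P => ?_ }
  by_contra! hP
  obtain ⟨Q, hPQ⟩ := exists_isCompl P
  have hQ : Q ≠ ⊤ := by
    rintro rfl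
    exact hP.1 (by simpa using hPQ.inf_eq_bot)
  apply hm
  ext x
  have hx : x ∈ (P ⊔ Q).toSubmodule := by rw [hPQ.sup_eq_top]; exact Submodule.mem_top
  rw [Subrepresentation.toSubmodule_sup] at hx
  obtain ⟨y, hy, z, hz, rfl⟩ := Submodule.mem_sup.1 hx
  rw [map_add, key P hP.2 y hy, key Q hQ z hz]
  rfl

lemma exists_irr {G : Type} [Group G] [Fintype G] (N : Subgroup G) [N.Normal] (m0 : G)
    (hm0 : m0 ∉ N) :
    ∃ (U : Type) (_ : AddCommGroup U) (_ : Module ℂ U) (_ : FiniteDimensional ℂ U)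
      (σ : Representation ℂ G U), σ.IsIrreducible ∧ (∀ n ∈ N, σ n = 1) ∧ σ m0 ≠ 1 := by
  have : FiniteDimensional ℂ (MonoidAlgebra ℂ (G ⧸ N)) :=
    Module.Finite.equiv (MonoidAlgebra.coeffLinearEquiv (S := ℂ) (M := G ⧸ N) ℂ).symm
  refine exists_irr_aux N m0 _ (MonoidAlgebra ℂ (G ⧸ N)) (Representation.ofMulAction ℂ G (G ⧸ N)) rfl ?_ ?_
  · intro n hn
    ext x : 2
    induction x using QuotientGroup.induction_on with
    | H g =>
    have : n • (g : G ⧸ N) = (g : G ⧸ N) := by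
      change ((n * g : G) : G ⧸ N) = g
      rw [eq_comm, QuotientGroup.eq]
      simpa [mul_assoc] using (inferInstance : N.Normal).conj_mem n hn g⁻¹
    simp [this]
  · intro h
    have := LinearMap.congr_fun h (MonoidAlgebra.single ((1 : G) : G ⧸ N) 1)
    rw [Representation.ofMulAction_single] at this
    have := MonoidAlgebra.single_left_injective one_ne_zero this
    have h2 : ((m0 * 1 : G) : G ⧸ N) = (1 : G) := this
    rw [eq_comm, QuotientGroup.eq] at h2
    exact hm0 (by simpa using h2)

/-- The main representation-theoretic step. -/
lemma codegree_step {G : Type} [Group G] [Fintype G] (p : ℕ) (hp : p.Prime)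
    (N M : Subgroup G) [N.Normal] (hNM : N ≤ M) (hrel : N.relIndex M = p) (hidx : M.index = p ^ 2)
    (hM : ∀ x, x ∈ M ↔ ∀ y, ⁅x, y⁆ ∈ N) (hab : ∀ x y : G, ⁅x, y⁆ ∈ M) :
    p ^ 2 ∈ codSet G := by
  obtain ⟨m0, hm0M, hm0⟩ : ∃ m ∈ M, m ∉ N := by
    by_contra! h
    have : N.relIndex M = 1 := Subgroup.relIndex_eq_one.2 h
    exact hp.one_lt.ne' (hrel ▸ this)
  obtain ⟨U, _, _, _, σ, hirr, hσN, hσm⟩ := exists_irr N m0 hm0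
  -- kernel facts
  have hker : ∀ m ∈ M, σ m = 1 → m ∈ N := by
    let K : Subgroup G := (MonoidHom.ker σ) ⊓ M
    have hNK : N ≤ K := le_inf (fun n hn => hσN n hn) hNM
    have hKM : K ≤ M := inf_le_right
    have hmul := Subgroup.relIndex_mul_relIndex N K M hNK hKM
    rw [hrel] at hmul
    rcases (Nat.prime_mul_iff.1 (hmul ▸ hp)) with ⟨_, h⟩ | ⟨_, h⟩
    · exact absurd ((Subgroup.relIndex_eq_one.1 h) hm0M).1 hσm
    · intro m hm hm1
      exact (Subgroup.relIndex_eq_one.1 h) ⟨hm1, hm⟩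
  have hcomm : ∀ m ∈ M, ∀ g, σ m * σ g = σ g * σ m := by
    intro m hm g
    have h1 := hσN _ ((hM m).1 hm g)
    have h2 : m * g = ⁅m, g⁆ * (g * m) := by simp [commutatorElement_def, mul_assoc]
    rw [← map_mul, h2, map_mul, h1, one_mul, map_mul]
  have hscal : ∀ m ∈ M, ∃ c : ℂ, σ m = c • 1 := by
    intro m hm
    let f : Representation.IntertwiningMap σ σ :=
      { toLinearMap := σ m
        isIntertwining' := fun g => hcomm m hm g }
    obtain ⟨c, hc⟩ :=
      (Representation.IsIrreducible.algebraMap_intertwiningMap_bijective_of_isAlgClosed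
        (ρ := σ)).2 f
    refine ⟨c, ?_⟩
    ext x
    have := congrArg (fun F : Representation.IntertwiningMap σ σ => F.toLinearMap x) hc
    exact this.symm
  have hnz : Nontrivial U := by
    by_contra h
    rw [not_nontrivial_iff_subsingleton] at h
    exact hσm (Subsingleton.elim _ _)
  have hzero : ∀ g, g ∉ M → σ.character g = 0 := by
    intro g hg
    rw [hM] at hg
    push Not at hg
    obtain ⟨y, hy⟩ := hg
    obtain ⟨c, hc⟩ := hscal _ (hab g y)
    have hc1 : c ≠ 1 := by
      rintro rfl
      exact hy (hker _ (hab g y) (by simpa using hc))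
    have h1 : σ.character (y * g * y⁻¹) = σ.character g := Representation.char_conj σ g y
    have h2 : σ.character (⁅g, y⁆ * (y * g * y⁻¹)) = c * σ.character (y * g * y⁻¹) := by
      simp only [Representation.character, map_mul, hc]
      simp
    have h3 : ⁅g, y⁆ * (y * g * y⁻¹) = g := by simp [commutatorElement_def, mul_assoc]
    rw [h3, h1] at h2
    have : (c - 1) * σ.character g = 0 := by linear_combination -h2
    exact (mul_eq_zero.1 this).resolve_left (sub_ne_zero.2 hc1)
  have hval : ∀ g ∈ M, σ.character g * σ.character g⁻¹ = (Module.finrank ℂ U : ℂ) ^ 2 := by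
    intro g hg
    obtain ⟨c, hc⟩ := hscal g hg
    obtain ⟨c', hc'⟩ := hscal _ (M.inv_mem hg)
    have h1 : σ g * σ g⁻¹ = 1 := by rw [← map_mul]; simp
    rw [hc, hc'] at h1
    have h2 : c * c' = 1 := by
      obtain ⟨x, hx⟩ := exists_ne (0 : U)
      have := LinearMap.congr_fun h1 x
      simp [smul_smul] at this
      have h3 : (c * c' - 1) • x = 0 := by
        rw [sub_smul, one_smul, sub_eq_zero]; simpa [mul_comm] using this
      exact sub_eq_zero.1 ((smul_eq_zero.1 h3).resolve_right hx)
    simp only [Representation.character, hc, hc']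
    simp
    linear_combination (Module.finrank ℂ U : ℂ) ^ 2 * h2
  have hsum : ∑ g : G, σ.character g * σ.character g⁻¹ = Nat.card G := by
    have : Invertible (Nat.card G : ℂ) := invertibleOfNonzero (NeZero.ne (Nat.card G : ℂ))
    have h := Representation.char_orthonormal σ σ
    rw [if_pos ⟨Representation.Equiv.refl σ⟩] at h
    rw [inv_mul_eq_one₀ (NeZero.ne _)] at h
    exact h.symm
  have hsum2 : ∑ g : G, σ.character g * σ.character g⁻¹
      = Nat.card M * (Module.finrank ℂ U : ℂ) ^ 2 := by
    classical
    have : ∀ g : G, σ.character g * σ.character g⁻¹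
        = if g ∈ M then (Module.finrank ℂ U : ℂ) ^ 2 else 0 := by
      intro g
      split_ifs with h
      · exact hval g h
      · rw [hzero g h, zero_mul]
    rw [Finset.sum_congr rfl (fun g _ => this g), ← Finset.sum_filter, Finset.sum_const,
      nsmul_eq_mul, ← Fintype.card_subtype, Nat.card_eq_fintype_card]
  have hdim : Module.finrank ℂ U = p := by
    rw [hsum] at hsum2
    have h1 : Nat.card G = Nat.card M * (Module.finrank ℂ U) ^ 2 := by exact_mod_cast hsum2
    rw [← Subgroup.card_mul_index M, hidx] at h1
    have h2 := Nat.eq_of_mul_eq_mul_left Nat.card_pos h1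
    exact (Nat.pow_left_injective (n := 2) (by norm_num) h2).symm
  have hkerN : MonoidHom.ker (Representation.asGroupHom σ) = N := by
    have hmem : ∀ g, g ∈ MonoidHom.ker (Representation.asGroupHom σ) ↔ σ g = 1 := by
      intro g
      rw [MonoidHom.mem_ker, Units.ext_iff, Representation.asGroupHom_apply, Units.val_one]
    ext g
    rw [hmem]
    refine ⟨fun hg => ?_, hσN g⟩
    by_cases hgM : g ∈ M
    · exact hker g hgM hg
    · exfalso
      have h0 := hzero g hgM
      simp only [Representation.character, hg] at h0
      simp [hdim, hp.ne_zero] at h0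
  refine ⟨FDRep.of σ, ?_, ?_⟩
  · rw [FDRep.simple_iff_char_is_norm_one]
    exact hsum
  · have h1 : repKer (FDRep.of σ) = N := hkerN
    have h2 : repDegree (FDRep.of σ) = p := hdim
    rw [codegree, h1, h2, ← Subgroup.relIndex_mul_index hNM, hrel, hidx]
    exact Nat.mul_div_cancel_left _ hp.pos

/-- A maximal class `p`-group of order at least `p^3` has `p^2` as a codegree. -/
theorem maximal_class_p_sq_codegree (p n : ℕ) (hp : p.Prime) (G : Type) [Group G] [Fintype G]
    (hcard : Fintype.card G = p ^ n) (hn : 3 ≤ n) (hmax : nilClass G = n - 1) :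
    p ^ 2 ∈ codSet G := by
  obtain ⟨k, rfl⟩ : ∃ k, n = k + 3 := ⟨n - 3, by omega⟩
  have hmax' : nilClass G = k + 2 := hmax
  have hne : {n | Subgroup.upperCentralSeries G n = ⊤}.Nonempty := by
    by_contra h
    rw [Set.not_nonempty_iff_eq_empty] at h
    have h' : sInf {n | Subgroup.upperCentralSeries G n = ⊤} = k + 2 := hmax'
    rw [h] at h'
    simp at h'
  have htop : Subgroup.upperCentralSeries G (k + 2) = ⊤ := by
    rw [← hmax']; exact Nat.sInf_mem hne
  have hlt : ∀ i < k + 2, Subgroup.upperCentralSeries G i ≠ ⊤ := by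
    intro i hi h
    have : nilClass G ≤ i := Nat.sInf_le h
    omega
  have hmono := Subgroup.upperCentralSeries_mono G
  have hcard' : Nat.card G = p ^ (k + 3) := by rw [Nat.card_eq_fintype_card, hcard]
  -- stabilisation
  have hstep : ∀ i < k + 2,
      ¬ Subgroup.upperCentralSeries G (i + 1) ≤ Subgroup.upperCentralSeries G i := by
    intro i hi hle
    have hst : ∀ j, Subgroup.upperCentralSeries G (i + j) = Subgroup.upperCentralSeries G i := by
      intro j
      induction j with
      | zero => rfl
      | succ j ihj =>
        refine le_antisymm (fun x hx => hle ?_) (hmono (by omega))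
        rw [← add_assoc, Subgroup.mem_upperCentralSeries_succ_iff, ihj] at hx
        exact (Subgroup.mem_upperCentralSeries_succ_iff).2 hx
    have := hst (k + 2 - i)
    rw [show i + (k + 2 - i) = k + 2 by omega, htop] at this
    exact hlt i hi this.symm
  have hpow : ∀ i, ∃ a, Nat.card (Subgroup.upperCentralSeries G i) = p ^ a := by
    intro i
    obtain ⟨a, _, ha⟩ := (Nat.dvd_prime_pow hp).1
      (hcard' ▸ Subgroup.card_subgroup_dvd_card (Subgroup.upperCentralSeries G i))
    exact ⟨a, ha⟩
  choose a ha using hpow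
  have hinj : ∀ {x y : ℕ}, p ^ x = p ^ y → x = y := fun h => Nat.pow_right_injective hp.two_le h
  have hastep : ∀ i < k + 2, a i < a (i + 1) := by
    intro i hi
    have h1 := Subgroup.card_le_of_le (hmono (Nat.le_succ i))
    have h2 : Nat.card (Subgroup.upperCentralSeries G i)
        < Nat.card (Subgroup.upperCentralSeries G (i + 1)) := by
      refine lt_of_le_of_ne h1 fun h => hstep i hi ?_
      exact (Subgroup.eq_of_le_of_card_ge (hmono (Nat.le_succ i)) h.ge).ge
    rw [ha, ha] at h2
    exact (Nat.pow_lt_pow_iff_right hp.one_lt).1 h2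
  have hage : ∀ i ≤ k + 2, i ≤ a i := by
    intro i
    induction i with
    | zero => intro _; exact Nat.zero_le _
    | succ i ihi =>
      intro hi
      have := ihi (by omega)
      have := hastep i (by omega)
      omega
  have hatop : a (k + 2) = k + 3 := by
    apply hinj
    rw [← ha, htop, ← hcard']
    exact Subgroup.card_top
  -- the top quotient is not cyclic
  have hncyc : a (k + 1) ≠ k + 2 := by
    intro h
    have hidx : (Subgroup.upperCentralSeries G (k + 1)).index = p := by
      have h1 := Subgroup.card_mul_index (Subgroup.upperCentralSeries G (k + 1))
      rw [ha, h, hcard', pow_succ p (k + 2)] at h1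
      exact Nat.eq_of_mul_eq_mul_left (pow_pos hp.pos _) h1
    have : Fact p.Prime := ⟨hp⟩
    have hcyc : IsCyclic (G ⧸ Subgroup.upperCentralSeries G (k + 1)) :=
      isCyclic_of_prime_card (p := p) hidx
    let f : G ⧸ Subgroup.upperCentralSeries G k →* G ⧸ Subgroup.upperCentralSeries G (k + 1) :=
      QuotientGroup.map _ _ (MonoidHom.id G) (hmono (Nat.le_succ k))
    have hf : f.ker ≤ Subgroup.center _ := by
      intro x hx
      induction x using QuotientGroup.induction_on with
      | H g =>
      have h1 : ((g : G) : G ⧸ Subgroup.upperCentralSeries G (k + 1)) = 1 := hx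
      rw [QuotientGroup.eq_one_iff] at h1
      have h2 : g ∈ Subgroup.upperCentralSeriesStep (Subgroup.upperCentralSeries G k) := h1
      rw [Subgroup.upperCentralSeriesStep_eq_comap_center] at h2
      exact h2
    have hc := f.isMulCommutative_of_isCyclic_of_ker_le_center hf
    apply hlt (k + 1) (by omega)
    rw [eq_top_iff]
    intro x _
    rw [Subgroup.mem_upperCentralSeries_succ_iff]
    intro y
    rw [← QuotientGroup.eq_one_iff]
    have h3 := hc.is_comm.comm (x : G ⧸ Subgroup.upperCentralSeries G k) y
    change ⁅(x : G ⧸ Subgroup.upperCentralSeries G k), (y : G ⧸ Subgroup.upperCentralSeries G k)⁆ = 1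
    rw [commutatorElement_eq_one_iff_mul_comm]
    exact h3
  have hs1 := hastep (k + 1) (by omega)
  have hs0 := hastep k (by omega)
  have hg0 := hage k (by omega)
  have hg1 := hage (k + 1) (by omega)
  have e1 : a (k + 1) = k + 1 := by
    have : a (k + 1 + 1) = k + 3 := hatop
    omega
  have e0 : a k = k := by omega
  refine codegree_step p hp (Subgroup.upperCentralSeries G k) (Subgroup.upperCentralSeries G (k + 1))
    (hmono (Nat.le_succ k)) ?_ ?_ (fun x => Subgroup.mem_upperCentralSeries_succ_iff) ?_
  · have h1 := Subgroup.relIndex_mul_index (hmono (Nat.le_succ k))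
    have h2 := Subgroup.card_mul_index (Subgroup.upperCentralSeries G k)
    have h3 := Subgroup.card_mul_index (Subgroup.upperCentralSeries G (k + 1))
    rw [ha, e0] at h2
    rw [ha, e1, ← h2, ← h1, ← mul_assoc, pow_succ] at h3
    have h4 := Nat.eq_of_mul_eq_mul_right (Nat.pos_of_ne_zero Subgroup.index_ne_zero_of_finite) h3
    exact (Nat.eq_of_mul_eq_mul_left (pow_pos hp.pos _) h4).symm
  · have h3 := Subgroup.card_mul_index (Subgroup.upperCentralSeries G (k + 1))
    rw [ha, e1, hcard', show k + 3 = (k + 1) + 2 by ring, pow_add p (k + 1) 2] at h3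
    exact Nat.eq_of_mul_eq_mul_left (pow_pos hp.pos _) h3
  · intro x y
    have hx : x ∈ Subgroup.upperCentralSeries G (k + 1 + 1) := by
      rw [show k + 1 + 1 = k + 2 by ring, htop]; trivial
    exact (Subgroup.mem_upperCentralSeries_succ_iff).1 hx y
end

section
/- Let p be a prime and let G be a finite p-group of maximal class with |G| ≥ p^6. Then p^4 ∈ cod(G). -/
open CategoryTheory

section MCGroup

/-- A group all of whose elements are central has class at most one. -/
theorem mc_class_le_one {G : Type} [Group G] [Group.IsNilpotent G]
    (h : Subgroup.center G = ⊤) : Group.nilpotencyClass G ≤ 1 := by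
  rw [← Subgroup.upperCentralSeries_eq_top_iff_nilpotencyClass_le, Subgroup.upperCentralSeries_one, h]

theorem mc_center_top {p n : ℕ} (hp : p.Prime) {G : Type} [Group G] [Finite G]
    (hq : Nat.card (G ⧸ Subgroup.center G) = p ^ n) (hn : n ≤ 1) :
    Subgroup.center G = ⊤ := by
  have := Fact.mk hp
  have : IsCyclic (G ⧸ Subgroup.center G) := by
    interval_cases n
    · have : Subsingleton (G ⧸ Subgroup.center G) := by
        rw [← Finite.card_le_one_iff_subsingleton]; simp [hq]
      infer_instance
    · exact isCyclic_of_prime_card (p := p) (by simpa using hq)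
  have := isMulCommutative_of_isCyclic_quotient_center_self G
  exact Subgroup.center_eq_top_iff.2 this

theorem mc_card_quot {p m : ℕ} (hp : p.Prime) {G : Type} [Group G] [Finite G]
    (hG : Nat.card G = p ^ m) (hm : 0 < m) :
    ∃ a, 0 < a ∧ a ≤ m ∧ Nat.card (Subgroup.center G) = p ^ a ∧
      Nat.card (G ⧸ Subgroup.center G) = p ^ (m - a) := by
  have := Fact.mk hp
  obtain ⟨a, ha, hc⟩ := IsPGroup.card_center_eq_prime_pow hG hm
  have hmul := Subgroup.card_eq_card_quotient_mul_card_subgroup (Subgroup.center G)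
  have ham : a ≤ m := by
    have : p ^ a ∣ p ^ m := by rw [← hc, ← hG]; exact Subgroup.card_subgroup_dvd_card _
    exact (Nat.pow_dvd_pow_iff_le_right hp.one_lt).1 this
  refine ⟨a, ha, ham, hc, ?_⟩
  rw [hG, hc] at hmul
  have h2 : p ^ m = p ^ (m - a) * p ^ a := by rw [← pow_add]; congr 1; omega
  rw [h2] at hmul
  exact (Nat.eq_of_mul_eq_mul_right (pow_pos hp.pos a) hmul).symm

theorem mc_nilp {p m : ℕ} (hp : p.Prime) {G : Type} [Group G] [Finite G]
    (hG : Nat.card G = p ^ m) : Group.IsNilpotent G := by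
  have := Fact.mk hp
  exact (IsPGroup.of_card hG).isNilpotent

/-- A group of order `p ^ m`, `m ≥ 2`, has class at most `m - 1`. -/
theorem mc_class_le {p : ℕ} (hp : p.Prime) (m : ℕ) : ∀ (G : Type) [Group G] [Finite G],
    Nat.card G = p ^ m → 2 ≤ m → Group.nilpotencyClass G ≤ m - 1 := by
  induction m using Nat.strong_induction_on with
  | _ m ih =>
    intro G _ _ hG hm
    have := mc_nilp hp hG
    obtain ⟨a, ha, ham, hc, hq⟩ := mc_card_quot hp hG (by omega)
    by_cases h : m - a ≤ 1
    · have := mc_class_le_one (mc_center_top hp hq h)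
      omega
    · have := ih (m - a) (by omega) (G ⧸ Subgroup.center G) hq (by omega)
      rw [Group.nilpotencyClass_quotient_center] at this
      omega

/-- Maximal class: the centre has order `p` and the quotient is again of maximal class. -/
theorem mc_center {p m : ℕ} (hp : p.Prime) {G : Type} [Group G] [Finite G]
    (hG : Nat.card G = p ^ m) (hm : 3 ≤ m) (hcl : Group.nilpotencyClass G = m - 1) :
    Nat.card (Subgroup.center G) = p ∧ Nat.card (G ⧸ Subgroup.center G) = p ^ (m - 1) ∧
      Group.nilpotencyClass (G ⧸ Subgroup.center G) = m - 1 - 1 := by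
  have := mc_nilp hp hG
  obtain ⟨a, ha, ham, hc, hq⟩ := mc_card_quot hp hG (by omega)
  have hcl2 := Group.nilpotencyClass_quotient_center (G := G)
  by_cases h : m - a ≤ 1
  · have := mc_class_le_one (mc_center_top hp hq h)
    omega
  · have := mc_class_le hp (m - a) (G ⧸ Subgroup.center G) hq (by omega)
    have h1 : a = 1 := by omega
    subst h1
    exact ⟨by simpa using hc, hq, by omega⟩

theorem mc_exists_quot {p : ℕ} (hp : p.Prime) (k : ℕ) : ∀ (G : Type) [Group G] [Finite G],
    Nat.card G = p ^ (6 + k) → Group.nilpotencyClass G = 6 + k - 1 →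
    ∃ (H : Type) (_ : Group H) (_ : Finite H) (f : G →* H), Function.Surjective f ∧
      Nat.card H = p ^ 6 ∧ Group.nilpotencyClass H = 5 := by
  induction k with
  | zero =>
    intro G _ _ hG hcl
    exact ⟨G, inferInstance, inferInstance, MonoidHom.id G, Function.surjective_id, hG, hcl⟩
  | succ k ih =>
    intro G _ _ hG hcl
    obtain ⟨_, h2, h3⟩ := mc_center hp hG (by omega) hcl
    obtain ⟨H, i1, i2, f, hf, h4, h5⟩ := ih (G ⧸ Subgroup.center G) h2 (by omega)
    exact ⟨H, i1, i2, f.comp (QuotientGroup.mk' _),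
      hf.comp (QuotientGroup.mk'_surjective _), h4, h5⟩

theorem mc_nilClass (G : Type) [Group G] [Group.IsNilpotent G] :
    nilClass G = Group.nilpotencyClass G := by
  classical
  rw [nilClass, Group.nilpotencyClass_def]
  exact Nat.sInf_def (Group.IsNilpotent.nilpotent G)

/-- A nontrivial normal subgroup of a nilpotent group contains a nontrivial central element. -/
theorem mc_normal_center {G : Type} [Group G] [Group.IsNilpotent G] (N : Subgroup G) [N.Normal]
    (hN : N ≠ ⊥) : ∃ z ∈ N, z ∈ Subgroup.center G ∧ z ≠ 1 := by
  classical
  have key : ∀ i, (∃ x ∈ N, x ∈ Subgroup.upperCentralSeries G i ∧ x ≠ 1) →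
      ∃ z ∈ N, z ∈ Subgroup.center G ∧ z ≠ 1 := by
    intro i
    induction i with
    | zero =>
      rintro ⟨x, _, hx, h1⟩
      exact absurd (by simpa using hx) h1
    | succ i ih =>
      rintro ⟨x, hxN, hx, h1⟩
      by_cases hc : x ∈ Subgroup.center G
      · exact ⟨x, hxN, hc, h1⟩
      · rw [Subgroup.mem_center_iff] at hc
        push Not at hc
        obtain ⟨g, hg⟩ := hc
        apply ih
        refine ⟨x * g * x⁻¹ * g⁻¹, ?_, Subgroup.mem_upperCentralSeries_succ_iff.1 hx g, ?_⟩
        · have := N.mul_mem hxN (Subgroup.Normal.conj_mem ‹_› _ (N.inv_mem hxN) g)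
          simpa [mul_assoc] using this
        · intro h
          apply hg
          rw [mul_inv_eq_one, mul_inv_eq_iff_eq_mul] at h
          exact h.symm
  obtain ⟨⟨x, hxN⟩, hx1⟩ := (Subgroup.ne_bot_iff_exists_ne_one).1 hN 
  obtain ⟨i, hi⟩ := Group.IsNilpotent.nilpotent G
  exact key i ⟨x, hxN, by simp [hi], by simpa using hx1⟩

end MCGroup

section MCRep

open Representation

variable {G : Type} [Group G] {V : Type} [AddCommGroup V] [Module ℂ V]

/-- Invariant nonzero subspaces of an irreducible representation are everything. -/
theorem mc_inv_top (ρ : Representation ℂ G V) [IsIrreducible ρ] (W : Submodule ℂ V)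
    (hW : ∀ g, ∀ v ∈ W, ρ g v ∈ W) (hne : W ≠ ⊥) : W = ⊤ := by
  have := IsSimpleOrder.eq_bot_or_eq_top (⟨W, fun g v hv => hW g v hv⟩ : Subrepresentation ρ)
  rcases this with h | h
  · exact absurd (congrArg Subrepresentation.toSubmodule h) hne
  · exact congrArg Subrepresentation.toSubmodule h

theorem mc_irred_of_inv (ρ : Representation ℂ G V) [Nontrivial V]
    (h : ∀ W : Submodule ℂ V, (∀ g, ∀ v ∈ W, ρ g v ∈ W) → W = ⊥ ∨ W = ⊤) : IsIrreducible ρ := by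
  have : Nontrivial (Subrepresentation ρ) :=
    ⟨⊥, ⊤, fun hh => bot_ne_top (α := Submodule ℂ V) (congrArg Subrepresentation.toSubmodule hh)⟩
  refine ⟨fun a => ?_⟩
  rcases h a.toSubmodule (fun g v hv => a.apply_mem_toSubmodule g hv) with h | h
  · left; exact Subrepresentation.toSubmodule_injective h
  · right; exact Subrepresentation.toSubmodule_injective h

theorem mc_nontrivial (ρ : Representation ℂ G V) [IsIrreducible ρ] : Nontrivial V := by
  by_contra h
  rw [not_nontrivial_iff_subsingleton] at h
  exact bot_ne_top (α := Subrepresentation ρ)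
    (Subrepresentation.toSubmodule_injective (Subsingleton.elim _ _))

/-- Schur: an endomorphism commuting with the action is a scalar. -/
theorem mc_schur_s8 [FiniteDimensional ℂ V] (ρ : Representation ℂ G V) [IsIrreducible ρ]
    (f : V →ₗ[ℂ] V) (hf : ∀ g v, f (ρ g v) = ρ g (f v)) : ∃ c : ℂ, ∀ v, f v = c • v := by
  have := mc_nontrivial ρ
  obtain ⟨c, hc⟩ := Module.End.exists_eigenvalue f
  refine ⟨c, ?_⟩
  have h := mc_inv_top ρ (Module.End.eigenspace f c) (fun g v hv => by
    rw [Module.End.mem_eigenspace_iff] at hv ⊢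
    rw [hf, hv, map_smul]) hc
  intro v
  have hv : v ∈ Module.End.eigenspace f c := by rw [h]; trivial
  exact Module.End.mem_eigenspace_iff.1 hv

theorem mc_central_scalar [FiniteDimensional ℂ V] (ρ : Representation ℂ G V) [IsIrreducible ρ]
    (z : G) (hz : z ∈ Subgroup.center G) : ∃ c : ℂ, ∀ v, ρ z v = c • v := by
  refine mc_schur_s8 ρ (ρ z) fun g v => ?_
  rw [← Module.End.mul_apply, ← Module.End.mul_apply, ← map_mul, ← map_mul,
    Subgroup.mem_center_iff.1 hz g]

/-- The bridge to the codegree set. -/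
theorem mc_cod [Fintype G] [FiniteDimensional ℂ V] {Q : Type} [Group Q] (π : G →* Q)
    (hπ : Function.Surjective π) (ρ : Representation ℂ Q V) [IsIrreducible ρ]
    (hinj : Function.Injective ρ) :
    Nat.card Q / Module.finrank ℂ V ∈ codSet G := by
  have := mc_nontrivial ρ
  let σ : Representation ℂ G V := MonoidHom.comp ρ π
  have hσ : IsIrreducible σ := mc_irred_of_inv σ fun W hW => by
    by_cases hb : W = ⊥
    · exact Or.inl hb
    · refine Or.inr (mc_inv_top ρ W (fun q v hv => ?_) hb)
      obtain ⟨g, rfl⟩ := hπ q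
      exact hW g v hv
  have hinv := invertibleOfNonzero (NeZero.ne (Nat.card G : ℂ))
  refine ⟨FDRep.of σ, ?_, ?_⟩
  · rw [FDRep.simple_iff_char_is_norm_one]
    have h := char_orthonormal σ σ
    rw [if_pos ⟨Representation.Equiv.refl σ⟩, inv_mul_eq_one₀ (NeZero.ne _)] at h
    exact h.symm
  · have hk : repKer (FDRep.of σ) = π.ker := by
      ext g
      rw [repKer, MonoidHom.mem_ker, MonoidHom.mem_ker, Units.ext_iff, asGroupHom_apply]
      change ρ (π g) = 1 ↔ _
      rw [← map_one ρ]
      exact hinj.eq_iff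
    have hd : repDegree (FDRep.of σ) = Module.finrank ℂ V := rfl
    rw [codegree, hk, hd, Subgroup.index_ker, MonoidHom.range_eq_top.2 hπ, Subgroup.card_top]

/-- Existence of a faithful irreducible representation. -/
theorem mc_exists_faithful [Finite G] [Group.IsNilpotent G] {p : ℕ} (hp : p.Prime)
    (hc : Nat.card (Subgroup.center G) = p) :
    ∃ (W : Type) (_ : AddCommGroup W) (_ : Module ℂ W) (_ : FiniteDimensional ℂ W)
      (ρ : Representation ℂ G W), IsIrreducible ρ ∧ Function.Injective ρ := by
  classical
  have := Fact.mk hp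
  have := Fintype.ofFinite G
  have hnt : Nontrivial (Subgroup.center G) := by
    rw [← Finite.one_lt_card_iff_nontrivial, hc]; exact hp.one_lt
  obtain ⟨⟨z, hz⟩, hz1⟩ := exists_ne (1 : Subgroup.center G)
  have hz1 : z ≠ 1 := fun h => hz1 (Subtype.ext h)
  have hne : NeZero (Nat.card G : ℂ) := inferInstance
  let A := MonoidAlgebra ℂ G
  have hss : IsSemisimpleModule A A := inferInstance
  have hs : ∃ N : Submodule A A, IsSimpleModule A N ∧
      ∃ x ∈ N, (MonoidAlgebra.of ℂ G z - 1) * x ≠ 0 := by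
    by_contra! hcon
    have htop := IsSemisimpleModule.sSup_simples_eq_top A A
    have hz' : (MonoidAlgebra.of ℂ G z - 1 : A) * 1 = 0 := by
      have h1 : (1 : A) ∈ sSup {m : Submodule A A | IsSimpleModule A m} := by
        rw [htop]; trivial
      rw [sSup_eq_iSup', Submodule.mem_iSup_iff_exists_finsupp] at h1
      obtain ⟨f, hf, hf1⟩ := h1
      have hf2 : (MonoidAlgebra.of ℂ G z - 1 : A) * (∑ i ∈ f.support, f i) = 0 := by
        rw [Finset.mul_sum]
        exact Finset.sum_eq_zero fun i _ => hcon i.1 i.2 _ (hf i)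
      have hf3 : (∑ i ∈ f.support, f i) = (1 : A) := hf1
      rwa [hf3] at hf2
    rw [mul_one, sub_eq_zero, ← map_one (MonoidAlgebra.of ℂ G)] at hz'
    exact hz1 (MonoidAlgebra.of_injective hz')
  obtain ⟨N, hN, x, hx, hx0⟩ := hs
  have hfd : FiniteDimensional ℂ A := inferInstance
  let W : Submodule ℂ A := N.restrictScalars ℂ
  let ρ : Representation ℂ G W :=
    { toFun := fun g => (LinearMap.mulLeft ℂ (MonoidAlgebra.of ℂ G g)).restrict
        (p := W) (q := W) (fun y hy => N.smul_mem (MonoidAlgebra.of ℂ G g) hy)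
      map_one' := by ext y : 2; exact one_mul _
      map_mul' := fun a b => by ext y : 2; simp [← mul_assoc, MonoidAlgebra.single_mul_single] }
  have hρ : ∀ g (y : W), ((ρ g y : W) : A) = MonoidAlgebra.of ℂ G g * (y : A) := fun g y => rfl
  have hirr : IsIrreducible ρ := by
    have hntW : Nontrivial W := ⟨⟨⟨x, hx⟩, 0, fun h => hx0 (by
      have : x = 0 := congrArg Subtype.val h
      rw [this, mul_zero])⟩⟩
    refine mc_irred_of_inv ρ fun U hU => ?_
    let U' : Submodule A N :=
      { carrier := {y | (⟨y.1, y.2⟩ : W) ∈ U}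
        add_mem' := fun {a b} ha hb => U.add_mem ha hb
        zero_mem' := U.zero_mem
        smul_mem' := fun c y hy => by
          induction c using MonoidAlgebra.induction_on with
          | of g => exact hU g _ hy
          | add a b ha hb =>
            rw [add_smul]
            exact U.add_mem ha hb
          | smul r a ha =>
            rw [smul_assoc]
            exact U.smul_mem r ha }
    rcases eq_bot_or_eq_top U' with h | h
    · left
      rw [eq_bot_iff]
      intro y hy
      have : (⟨y.1, y.2⟩ : N) ∈ U' := hy
      rw [h, Submodule.mem_bot] at this
      rw [Submodule.mem_bot]
      exact Subtype.ext (congrArg Subtype.val this)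
    · right
      rw [eq_top_iff]
      intro y _
      have : (⟨y.1, y.2⟩ : N) ∈ U' := by rw [h]; trivial
      exact this
  refine ⟨W, inferInstance, inferInstance, inferInstance, ρ, hirr, ?_⟩
  have hzρ : ρ z ≠ 1 := fun h => hx0 (by
    have := congrArg Subtype.val (LinearMap.congr_fun h (⟨x, hx⟩ : W))
    rw [hρ] at this
    rw [sub_mul, one_mul, this]
    exact sub_self _)
  let φ : G →* (W →ₗ[ℂ] W) := ρ
  change Function.Injective φ
  rw [← MonoidHom.ker_eq_bot_iff]
  by_contra hker
  obtain ⟨w, hwk, hwc, hw1⟩ := mc_normal_center φ.ker hker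
  -- `w` generates the centre
  have hmem : (⟨z, hz⟩ : Subgroup.center G) ∈ Subgroup.zpowers (⟨w, hwc⟩ : Subgroup.center G) :=
    mem_zpowers_of_prime_card (p := p) hc (fun h => hw1 (congrArg Subtype.val h))
  obtain ⟨k, hk⟩ := Subgroup.mem_zpowers_iff.1 hmem
  have hk' : w ^ k = z := congrArg Subtype.val hk
  apply hzρ
  have : z ∈ φ.ker := hk' ▸ φ.ker.zpow_mem hwk k
  exact MonoidHom.mem_ker.1 this

end MCRep

section MCRep2

open Representation

variable {G : Type} [Group G] {V : Type} [AddCommGroup V] [Module ℂ V] [FiniteDimensional ℂ V]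

theorem mc_char_integral [Finite G] (ρ : Representation ℂ G V) (g : G) :
    IsIntegral ℤ (ρ.character g) := by
  rw [character, Module.End.trace_eq_sum_roots_charpoly_of_splits (IsAlgClosed.splits _)]
  refine IsIntegral.multiset_sum fun μ hμ => ?_
  have hev : Module.End.HasEigenvalue (ρ g) μ := by
    rw [Module.End.hasEigenvalue_iff_isRoot_charpoly]
    exact (Polynomial.mem_roots'.1 hμ).2
  obtain ⟨v, hv⟩ := hev.exists_hasEigenvector
  have hpow : μ ^ Nat.card G = 1 := by
    have h := hv.pow_apply (Nat.card G)
    rw [← map_pow, pow_card_eq_one', map_one, Module.End.one_apply] at h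
    have h2 : (μ ^ Nat.card G - 1) • v = 0 := by rw [sub_smul, one_smul, ← h, sub_self]
    rcases smul_eq_zero.1 h2 with h3 | h3
    · exact sub_eq_zero.1 h3
    · exact absurd h3 hv.2
  exact IsIntegral.of_pow Nat.card_pos (by rw [hpow]; exact isIntegral_one)

/-- The degree of an irreducible representation divides the group order. -/
theorem mc_dvd [Fintype G] (ρ : Representation ℂ G V) [IsIrreducible ρ] :
    Module.finrank ℂ V ∣ Nat.card G := by
  classical
  have := mc_nontrivial ρ
  have hinv := invertibleOfNonzero (NeZero.ne (Nat.card G : ℂ))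
  have horth : ∑ g : G, ρ.character g * ρ.character g⁻¹ = (Nat.card G : ℂ) := by
    have h := char_orthonormal ρ ρ
    rw [if_pos ⟨Representation.Equiv.refl ρ⟩, inv_mul_eq_one₀ (NeZero.ne _)] at h
    exact h.symm
  let E : V →ₗ[ℂ] V := ∑ g : G, ρ.character g⁻¹ • ρ g
  have hE : ∀ v, E v = ∑ g : G, ρ.character g⁻¹ • ρ g v := fun v => by
    simp [E, LinearMap.sum_apply]
  obtain ⟨c, hc⟩ := mc_schur_s8 ρ E (fun h v => by
    rw [hE, hE, map_sum]
    simp_rw [map_smul, ← Module.End.mul_apply, ← map_mul]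
    refine Fintype.sum_equiv (MulAut.conj h⁻¹).toEquiv _ _ fun g => ?_
    have h1 : (MulAut.conj h⁻¹).toEquiv g = h⁻¹ * g * h := by simp
    rw [h1]
    have h2 : (h⁻¹ * g * h)⁻¹ = h⁻¹ * g⁻¹ * h⁻¹⁻¹ := by group
    rw [h2, char_conj]
    congr 3
    group)
  have htr : c * Module.finrank ℂ V = Nat.card G := by
    have hEc : E = c • LinearMap.id := by ext v; simpa using hc v
    have h1 : LinearMap.trace ℂ V E = c * Module.finrank ℂ V := by
      rw [hEc, map_smul, LinearMap.trace_id, smul_eq_mul]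
    rw [← h1, ← horth]
    simp only [E, map_sum, map_smul, smul_eq_mul]
    exact Finset.sum_congr rfl fun g _ => mul_comm _ _
  -- integrality of `c`
  let O := integralClosure ℤ ℂ
  obtain ⟨v, hv⟩ := exists_ne (0 : V)
  let N : Submodule O V := Submodule.span O (Set.range fun g : G => ρ g v)
  have hcO : IsIntegral O c := by
    refine isIntegral_of_smul_mem_submodule N ?_ ?_ c ?_
    · intro h
      have : ρ 1 v ∈ N := Submodule.subset_span ⟨1, rfl⟩
      rw [h, map_one] at this
      exact hv (by simpa using this)
    · exact Submodule.fg_span (Set.finite_range _)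
    · intro x hx
      rw [← hc, hE]
      refine Submodule.sum_mem _ fun g _ => ?_
      have h1 : ρ g x ∈ N := by
        induction hx using Submodule.span_induction with
        | mem y hy =>
          obtain ⟨h, rfl⟩ := hy
          exact Submodule.subset_span ⟨g * h, by simp⟩
        | zero => simp
        | add a b _ _ ha hb => rw [map_add]; exact N.add_mem ha hb
        | smul r a _ ha =>
          have : ρ g (r • a) = r • ρ g a := map_smul (ρ g) (r : ℂ) a
          rw [this]
          exact N.smul_mem r ha
      exact N.smul_mem (⟨_, mc_char_integral ρ g⁻¹⟩ : O) h1
  have hcZ : IsIntegral ℤ c := isIntegral_trans (R := ℤ) (A := O) c hcO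
  have hd : (Module.finrank ℂ V : ℂ) ≠ 0 := by
    exact_mod_cast (Module.finrank_pos (R := ℂ) (M := V)).ne'
  have hcq : c = algebraMap ℚ ℂ ((Nat.card G : ℚ) / Module.finrank ℂ V) := by
    rw [eq_div_of_mul_eq hd htr]; simp
  rw [hcq, isIntegral_algebraMap_iff (algebraMap ℚ ℂ).injective] at hcZ
  obtain ⟨k, hk⟩ := IsIntegrallyClosed.isIntegral_iff.1 hcZ
  have hd' : (Module.finrank ℂ V : ℚ) ≠ 0 := by exact_mod_cast hd
  rw [eq_div_iff hd', eq_intCast] at hk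
  have hk2 : k * (Module.finrank ℂ V : ℤ) = (Nat.card G : ℤ) := by
    exact_mod_cast hk
  exact Int.natCast_dvd_natCast.1 ⟨k, by rw [← hk2, mul_comm]⟩

/-- Burnside: the image of the group spans the endomorphisms. -/
theorem mc_span_top (ρ : Representation ℂ G V) [IsIrreducible ρ] :
    Submodule.span ℂ (Set.range fun g : G => ρ g) = ⊤ := by
  classical
  rw [eq_top_iff]
  intro f _
  let A := MonoidAlgebra ℂ G
  let b := Module.finBasis ℂ V
  have hscal : ∀ e : Module.End A ρ.asModule, ∃ c : ℂ, ∀ v : ρ.asModule, e v = c • v := by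
    intro e
    obtain ⟨c, hc⟩ := (IsSimpleModule.algebraMap_end_bijective_of_isAlgClosed (A := A)
      (V := ρ.asModule) ℂ).2 e
    exact ⟨c, fun v => by rw [← hc]; rfl⟩
  let F : Module.End (Module.End A ρ.asModule) ρ.asModule :=
    { toFun := fun v => ρ.asModuleEquiv.symm (f (ρ.asModuleEquiv v))
      map_add' := fun a b => by simp
      map_smul' := fun e v => by
        obtain ⟨c, hc⟩ := hscal e
        simp only [Module.End.smul_def, RingHom.id_apply, hc]
        exact map_smul f c _ }
  obtain ⟨r, hr⟩ := jacobson_density (R := A) F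
    (Finset.univ.image fun i => ρ.asModuleEquiv.symm (b i))
  have hfr : f = ρ.asAlgebraHom r := by
    refine b.ext fun i => ?_
    have := hr (ρ.asModuleEquiv.symm (b i)) (Finset.mem_image_of_mem _ (Finset.mem_univ i))
    exact this
  rw [hfr]
  clear hfr hr
  induction r using MonoidAlgebra.induction_on with
  | of g => exact Submodule.subset_span ⟨g, by simp⟩
  | add a b ha hb => rw [map_add]; exact Submodule.add_mem _ ha hb
  | smul c a ha => rw [map_smul]; exact Submodule.smul_mem _ c ha

theorem mc_sq_le [Finite G] (ρ : Representation ℂ G V) [IsIrreducible ρ] :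
    Module.finrank ℂ V ^ 2 ≤ Nat.card (G ⧸ Subgroup.center G) := by
  classical
  have := Fintype.ofFinite (G ⧸ Subgroup.center G)
  let s : G ⧸ Subgroup.center G → (V →ₗ[ℂ] V) := fun q => ρ q.out
  have hs : Submodule.span ℂ (Set.range s) = ⊤ := by
    rw [eq_top_iff, ← mc_span_top ρ, Submodule.span_le]
    rintro _ ⟨g, rfl⟩
    obtain ⟨⟨z, hz⟩, h⟩ := QuotientGroup.mk_out_eq_mul (Subgroup.center G) g
    obtain ⟨c, hc⟩ := mc_central_scalar ρ z⁻¹ (Subgroup.inv_mem _ hz)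
    have h2 : ρ g = c • s g := by
      ext v
      have : g = z⁻¹ * (g : G ⧸ Subgroup.center G).out := by
        rw [h]
        simp only []
        rw [Subgroup.mem_center_iff.1 hz g, inv_mul_cancel_left]
      conv_lhs => rw [this]
      rw [map_mul, Module.End.mul_apply, hc]
      rfl
    rw [SetLike.mem_coe]
    dsimp only
    rw [h2]
    exact Submodule.smul_mem _ _ (Submodule.subset_span ⟨_, rfl⟩)
  have h := finrank_range_le_card (R := ℂ) s
  rw [Set.finrank, hs, finrank_top, Module.finrank_linearMap] at h
  rw [Nat.card_eq_fintype_card, sq]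
  exact h

/-- A commutative subgroup bounds the degree by its index. -/
theorem mc_le_index [Finite G] (ρ : Representation ℂ G V) [IsIrreducible ρ] (A : Subgroup G)
    (hA : ∀ a ∈ A, ∀ b ∈ A, a * b = b * a) : Module.finrank ℂ V ≤ A.index := by
  classical
  have := mc_nontrivial ρ
  have := Fintype.ofFinite (G ⧸ A)
  -- common eigenvector
  have hev : ∃ v : V, v ≠ 0 ∧ ∀ a ∈ A, ∃ c : ℂ, ρ a v = c • v := by
    let τ : Representation ℂ A V := MonoidHom.comp ρ A.subtype
    have hmin : ∃ W : Submodule ℂ V, W ≠ ⊥ ∧ (∀ a ∈ A, ∀ v ∈ W, ρ a v ∈ W) ∧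
        ∀ U : Submodule ℂ V, U ≠ ⊥ → (∀ a ∈ A, ∀ v ∈ U, ρ a v ∈ U) → ¬ U < W := by
      obtain ⟨W, hW, hm⟩ := WellFounded.has_min (r := ((· < ·) : Submodule ℂ V → Submodule ℂ V → Prop))
        wellFounded_lt {W | W ≠ ⊥ ∧ ∀ a ∈ A, ∀ v ∈ W, ρ a v ∈ W} ⟨⊤, top_ne_bot, fun _ _ _ _ => trivial⟩
      exact ⟨W, hW.1, hW.2, fun U h1 h2 => hm U ⟨h1, h2⟩⟩
    obtain ⟨W, hWb, hWi, hWm⟩ := hmin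
    obtain ⟨v, hvW, hv0⟩ := (Submodule.ne_bot_iff W).1 hWb
    refine ⟨v, hv0, fun a ha => ?_⟩
    have hWn : Nontrivial W := ⟨⟨v, hvW⟩, 0, fun h => hv0 (congrArg Subtype.val h)⟩
    obtain ⟨c, hc⟩ := Module.End.exists_eigenvalue ((ρ a).restrict (hWi a ha))
    obtain ⟨w, hw⟩ := hc.exists_hasEigenvector
    have hw1 : ρ a w = c • (w : V) := congrArg Subtype.val hw.apply_eq_smul
    have hw0 : (w : V) ≠ 0 := fun h => hw.2 (Subtype.ext h)
    let U := W ⊓ Module.End.eigenspace (ρ a) c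
    have hUb : U ≠ ⊥ := (Submodule.ne_bot_iff _).2
      ⟨w, ⟨w.2, Module.End.mem_eigenspace_iff.2 hw1⟩, hw0⟩
    have hUi : ∀ b ∈ A, ∀ v ∈ U, ρ b v ∈ U := fun b hb v hv => by
      refine ⟨hWi b hb v hv.1, ?_⟩
      rw [SetLike.mem_coe, Module.End.mem_eigenspace_iff, ← Module.End.mul_apply, ← map_mul, hA a ha b hb, map_mul,
        Module.End.mul_apply, Module.End.mem_eigenspace_iff.1 hv.2, map_smul]
    have hUW : U = W := by
      by_contra hne
      exact hWm U hUb hUi (lt_of_le_of_ne inf_le_left hne)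
    have : v ∈ U := hUW ▸ hvW
    exact ⟨c, Module.End.mem_eigenspace_iff.1 this.2⟩
  obtain ⟨v, hv0, hv⟩ := hev
  let s : G ⧸ A → V := fun q => ρ q.out v
  have hmem : ∀ g, ρ g v ∈ Submodule.span ℂ (Set.range s) := by
    intro g
    obtain ⟨⟨a, ha⟩, h⟩ := QuotientGroup.mk_out_eq_mul A g
    obtain ⟨c, hc⟩ := hv a⁻¹ (A.inv_mem ha)
    have hg : g = (g : G ⧸ A).out * a⁻¹ := by
      rw [h]; simp
    rw [hg, map_mul, Module.End.mul_apply, hc, map_smul]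
    exact Submodule.smul_mem _ _ (Submodule.subset_span ⟨_, rfl⟩)
  have hs : Submodule.span ℂ (Set.range s) = ⊤ := by
    refine mc_inv_top ρ _ (fun g x hx => ?_) ?_
    · induction hx using Submodule.span_induction with
      | mem y hy =>
        obtain ⟨q, rfl⟩ := hy
        have := hmem (g * q.out)
        rwa [map_mul, Module.End.mul_apply] at this
      | zero => simp
      | add a b _ _ ha hb => rw [map_add]; exact Submodule.add_mem _ ha hb
      | smul r a _ ha => rw [map_smul]; exact Submodule.smul_mem _ _ ha
    · refine (Submodule.ne_bot_iff _).2 ⟨v, ?_, hv0⟩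
      simpa using hmem 1
  have h := finrank_range_le_card (R := ℂ) s
  rw [Set.finrank, hs, finrank_top] at h
  rwa [Subgroup.index, Nat.card_eq_fintype_card]

/-- A faithful representation of degree one forces the group to be abelian. -/
theorem mc_deg_one_s8 (ρ : Representation ℂ G V) (hinj : Function.Injective ρ)
    (h1 : Module.finrank ℂ V = 1) : Subgroup.center G = ⊤ := by
  rw [eq_top_iff]
  intro g _
  rw [Subgroup.mem_center_iff]
  intro h
  apply hinj
  obtain ⟨v, hv0, hv⟩ := finrank_eq_one_iff'.1 h1
  obtain ⟨a, ha⟩ := hv (ρ g v)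
  obtain ⟨b, hb⟩ := hv (ρ h v)
  ext w
  obtain ⟨c, rfl⟩ := hv w
  simp only [map_mul, Module.End.mul_apply, map_smul, ← ha, ← hb]
  simp only [← ha, ← hb, smul_smul]
  congr 1
  ring

/-- Faithful irreducible of degree `p`: the centralizer of a second-centre element is abelian. -/
theorem mc_deg_p [Finite G] {p : ℕ} (hp : p.Prime) (ρ : Representation ℂ G V) [IsIrreducible ρ]
    (hinj : Function.Injective ρ) (hd : Module.finrank ℂ V = p)
    (hc : Nat.card (Subgroup.center G) = p) (z h : G)
    (hz : ∀ g, g * z * g⁻¹ * z⁻¹ ∈ Subgroup.center G) (hh : h * z ≠ z * h) :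
    ∀ a ∈ Subgroup.centralizer {z}, ∀ b ∈ Subgroup.centralizer {z}, a * b = b * a := by
  have := mc_nontrivial ρ
  have := Fact.mk hp
  -- `z * h = h * z * c`
  obtain ⟨c, hcdef⟩ : ∃ c, c = (h * z * h⁻¹ * z⁻¹)⁻¹ := ⟨_, rfl⟩
  have hcc : c ∈ Subgroup.center G := hcdef ▸ Subgroup.inv_mem _ (hz h)
  have hc1 : c ≠ 1 := by
    intro h1
    rw [hcdef, inv_eq_one, mul_inv_eq_one, mul_inv_eq_iff_eq_mul] at h1
    exact hh h1
  have hzh : z * h = c * (h * z) := by rw [hcdef]; group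
  obtain ⟨ω, hω⟩ := mc_central_scalar ρ c hcc
  have hcp : c ^ p = 1 := by
    have : (⟨c, hcc⟩ : Subgroup.center G) ^ p = 1 := by rw [← hc]; exact pow_card_eq_one'
    exact congrArg Subtype.val this
  obtain ⟨μ, hμ⟩ := Module.End.exists_eigenvalue (ρ z)
  obtain ⟨v, hv⟩ := hμ.exists_hasEigenvector
  have hv1 : ρ z v = μ • v := hv.apply_eq_smul
  have hv0 : v ≠ 0 := hv.2
  have hinjg : ∀ g : G, ∀ w : V, ρ g w = 0 → w = 0 := fun g w hw => by
    have : ρ (g⁻¹ * g) w = 0 := by rw [map_mul, Module.End.mul_apply, hw, map_zero]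
    simpa using this
  have hμ0 : μ ≠ 0 := by
    rintro rfl
    exact hv0 (hinjg z v (by rw [hv1, zero_smul]))
  have hω1 : ω ≠ 1 := by
    rintro rfl
    apply hc1
    apply hinj
    ext w
    rw [hω w, one_smul, map_one, Module.End.one_apply]
  have hcpow : ∀ n : ℕ, ∀ w, ρ (c ^ n) w = ω ^ n • w := by
    intro n
    induction n with
    | zero => intro w; simp
    | succ n ih => intro w; rw [pow_succ, map_mul, Module.End.mul_apply, hω, map_smul, ih, smul_smul,
        pow_succ, mul_comm]
  have hωp : ω ^ p = 1 := by
    have := hcpow p v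
    rw [hcp, map_one, Module.End.one_apply] at this
    have h2 : (ω ^ p - 1) • v = 0 := by rw [sub_smul, one_smul, ← this, sub_self]
    exact sub_eq_zero.1 ((smul_eq_zero.1 h2).resolve_right hv0)
  have hord : orderOf ω = p := orderOf_eq_prime hωp hω1
  have heig : ∀ i : ℕ, ρ z (ρ (h ^ i) v) = (μ * ω ^ i) • ρ (h ^ i) v := by
    intro i
    induction i with
    | zero => simpa using hv1
    | succ i ih =>
      rw [pow_succ', map_mul, Module.End.mul_apply, ← Module.End.mul_apply (ρ z), ← map_mul, hzh,
        map_mul, Module.End.mul_apply, hω, map_mul, Module.End.mul_apply, ih, map_smul, smul_smul]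
      congr 1
      ring
  let m : Fin p → ℂ := fun i => μ * ω ^ (i : ℕ)
  let u : Fin p → V := fun i => ρ (h ^ (i : ℕ)) v
  have hm : Function.Injective m := by
    intro i j hij
    have h1 : ω ^ (i : ℕ) = ω ^ (j : ℕ) := mul_left_cancel₀ hμ0 hij
    exact Fin.ext (pow_injOn_Iio_orderOf (by simp [hord]) (by simp [hord]) h1)
  have hli : LinearIndependent ℂ u :=
    Module.End.eigenvectors_linearIndependent' (ρ z) m hm u fun i =>
      ⟨Module.End.mem_eigenspace_iff.2 (heig i), fun h0 => hv0 (hinjg _ _ h0)⟩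
  have : Nonempty (Fin p) := ⟨⟨0, hp.pos⟩⟩
  let B := basisOfLinearIndependentOfCardEqFinrank hli (by simp [hd])
  have hB : ∀ i, B i = u i := fun i => by simp [B]
  have hrepr : ∀ x i, B.repr (ρ z x) i = m i * B.repr x i := by
    intro x i
    have hlin : (B.coord i).comp (ρ z) = m i • B.coord i := by
      refine B.ext fun j => ?_
      have : ρ z (B j) = m j • B j := by rw [hB]; exact heig j
      simp only [LinearMap.comp_apply, this, map_smul, LinearMap.smul_apply, Module.Basis.coord_apply,
        Module.Basis.repr_self, smul_eq_mul]
      by_cases hij : j = i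
      · rw [hij]
      · simp [Finsupp.single_apply, hij]
    exact LinearMap.congr_fun hlin x
  have hdiag : ∀ t ∈ Subgroup.centralizer {z}, ∀ j, ∃ α : ℂ, ρ t (B j) = α • B j := by
    intro t ht j
    have htz : z * t = t * z := by
      have := Subgroup.mem_centralizer_singleton_iff.1 ht
      exact this.symm
    refine ⟨B.repr (ρ t (B j)) j, B.repr.injective ?_⟩
    ext i
    rw [map_smul, Module.Basis.repr_self]
    by_cases hij : j = i
    · subst hij; simp
    · have h1 : ρ z (ρ t (B j)) = m j • ρ t (B j) := by
        rw [← Module.End.mul_apply, ← map_mul, htz, map_mul, Module.End.mul_apply, hB]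
        have : ρ z (u j) = m j • u j := heig j
        rw [this, map_smul]
      have h2 := hrepr (ρ t (B j)) i
      rw [h1, map_smul, Finsupp.smul_apply, smul_eq_mul] at h2
      have h3 : (m j - m i) * B.repr (ρ t (B j)) i = 0 := by rw [sub_mul, h2, sub_self]
      have h4 := (mul_eq_zero.1 h3).resolve_left (sub_ne_zero.2 fun h => hij (hm h))
      simp [h4, Finsupp.single_apply, hij]
  intro a ha b hb
  apply hinj
  refine B.ext fun j => ?_
  obtain ⟨α, hα⟩ := hdiag a ha j
  obtain ⟨β, hβ⟩ := hdiag b hb j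
  rw [map_mul, map_mul, Module.End.mul_apply, Module.End.mul_apply, hα, hβ, map_smul, map_smul, hα,
    hβ, smul_comm]

theorem mc_index_le [Finite G] (z : G) (hz : ∀ g, g * z * g⁻¹ * z⁻¹ ∈ Subgroup.center G) :
    (Subgroup.centralizer {z}).index ≤ Nat.card (Subgroup.center G) := by
  let f : G →* Subgroup.center G :=
    { toFun := fun g => ⟨g * z * g⁻¹ * z⁻¹, hz g⟩
      map_one' := by simp
      map_mul' := fun a b => by
        apply Subtype.ext
        have h1 := Subgroup.mem_center_iff.1 (hz b) a
        change a * b * z * (a * b)⁻¹ * z⁻¹ = (a * z * a⁻¹ * z⁻¹) * (b * z * b⁻¹ * z⁻¹)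
        have h2 := Subgroup.mem_center_iff.1 (hz b) (a * z * a⁻¹ * z⁻¹)
        rw [h2]
        calc a * b * z * (a * b)⁻¹ * z⁻¹ = (a * (b * z * b⁻¹ * z⁻¹)) * (z * a⁻¹ * z⁻¹) := by group
          _ = _ := by rw [h1]; group }
  have hk : f.ker = Subgroup.centralizer {z} := by
    ext g
    rw [MonoidHom.mem_ker, Subgroup.mem_centralizer_singleton_iff]
    change (⟨g * z * g⁻¹ * z⁻¹, hz g⟩ : Subgroup.center G) = 1 ↔ _
    rw [Subtype.ext_iff]
    change g * z * g⁻¹ * z⁻¹ = 1 ↔ _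
    rw [mul_inv_eq_one, mul_inv_eq_iff_eq_mul]
  rw [← hk, Subgroup.index_ker]
  exact Subgroup.card_le_card_group _

end MCRep2

theorem mc_core {p : ℕ} (hp : p.Prime) {G : Type} [Group G] [Fintype G] {H : Type} [Group H]
    [Finite H] (π : G →* H) (hπ : Function.Surjective π) (hH : Nat.card H = p ^ 6)
    (hcl : Group.nilpotencyClass H = 5) : p ^ 4 ∈ codSet G := by
  have := Fact.mk hp
  have := Fintype.ofFinite H
  have hHn := mc_nilp hp hH
  obtain ⟨hZ, hK, hclK⟩ := mc_center hp hH (by norm_num) hcl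
  obtain ⟨hZK, -, -⟩ := mc_center hp hK (by norm_num) hclK
  have hKn := mc_nilp hp hK
  obtain ⟨V, _, _, _, ρ, hρ, hρi⟩ := mc_exists_faithful (G := H) hp hZ
  obtain ⟨k, hk6, hk⟩ := (Nat.dvd_prime_pow hp).1 (hH ▸ mc_dvd ρ)
  have hsq := mc_sq_le ρ
  rw [hk, hK, ← pow_mul, Nat.pow_le_pow_iff_right hp.one_lt] at hsq
  have hne : ∀ j : ℕ, 1 < j → p ≠ p ^ j := fun j hj h => by
    have := Nat.pow_right_injective hp.two_le (show p ^ 1 = p ^ j by simpa using h)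
    omega
  have hkc : k = 0 ∨ k = 1 ∨ k = 2 := by omega
  rcases hkc with rfl | rfl | rfl
  · have h := mc_deg_one_s8 ρ hρi (by simpa using hk)
    rw [h, Subgroup.card_top, hH] at hZ
    exact absurd hZ.symm (hne 6 (by norm_num))
  · -- degree `p`: use the quotient by the centre
    have hKnt : Nontrivial (Subgroup.center (H ⧸ Subgroup.center H)) := by
      rw [← Finite.one_lt_card_iff_nontrivial, hZK]; exact hp.one_lt
    obtain ⟨⟨zq, hzq⟩, hzq1⟩ := exists_ne (1 : Subgroup.center (H ⧸ Subgroup.center H))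
    obtain ⟨z, rfl⟩ := QuotientGroup.mk_surjective zq
    have hz : ∀ g, g * z * g⁻¹ * z⁻¹ ∈ Subgroup.center H := fun g => by
      rw [← QuotientGroup.eq_one_iff]
      have := Subgroup.mem_center_iff.1 hzq (g : H ⧸ Subgroup.center H)
      simp only [QuotientGroup.mk_mul, QuotientGroup.mk_inv]
      rw [this]
      group
    have hznc : z ∉ Subgroup.center H := fun h =>
      hzq1 (Subtype.ext ((QuotientGroup.eq_one_iff z).2 h))
    rw [Subgroup.mem_center_iff] at hznc
    push Not at hznc
    obtain ⟨h, hh⟩ := hznc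
    have hcomm := mc_deg_p hp ρ hρi (by simpa using hk) hZ z h hz hh
    have hidx := mc_index_le z hz
    let T := (Subgroup.centralizer {z}).map (QuotientGroup.mk' (Subgroup.center H))
    have hT : ∀ a ∈ T, ∀ b ∈ T, a * b = b * a := by
      rintro _ ⟨a, ha, rfl⟩ _ ⟨b, hb, rfl⟩
      rw [← map_mul, ← map_mul, hcomm a ha b hb]
    have hTi : T.index ≤ p := by
      have := Subgroup.index_map_dvd (Subgroup.centralizer {z})
        (QuotientGroup.mk'_surjective (Subgroup.center H))
      exact (Nat.le_of_dvd (Nat.pos_of_ne_zero Subgroup.index_ne_zero_of_finite) this).trans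
        (hidx.trans hZ.le)
    have := Fintype.ofFinite (H ⧸ Subgroup.center H)
    obtain ⟨U, _, _, _, σ, hσ, hσi⟩ := mc_exists_faithful (G := H ⧸ Subgroup.center H) hp hZK
    obtain ⟨l, hl5, hl⟩ := (Nat.dvd_prime_pow hp).1 (hK ▸ mc_dvd σ)
    have hle := (mc_le_index σ T hT).trans hTi
    have hl1 : l ≤ 1 := by
      rw [hl] at hle
      exact (Nat.pow_le_pow_iff_right hp.one_lt).1 (by simpa using hle)
    have hl0 : l ≠ 0 := by
      rintro rfl
      have h := mc_deg_one_s8 σ hσi (by simpa using hl)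
      rw [h, Subgroup.card_top, hK] at hZK
      exact absurd hZK.symm (hne 5 (by norm_num))
    have hl2 : l = 1 := by omega
    subst hl2
    have := mc_cod ((QuotientGroup.mk' (Subgroup.center H)).comp π)
      ((QuotientGroup.mk'_surjective _).comp hπ) σ hσi
    rwa [hK, hl, Nat.pow_div (by norm_num) hp.pos] at this
  · have := mc_cod π hπ ρ hρi
    rwa [hH, hk, Nat.pow_div (by norm_num) hp.pos] at this

/-- A maximal class `p`-group of order at least `p^6` has `p^4` as a codegree. -/
theorem maximal_class_p_fourth_codegree (p n : ℕ) (hp : p.Prime) (G : Type) [Group G] [Fintype G]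
    (hcard : Fintype.card G = p ^ n) (hn : 6 ≤ n) (hmax : nilClass G = n - 1) :
    p ^ 4 ∈ codSet G := by
  obtain ⟨k, rfl⟩ := Nat.exists_eq_add_of_le hn
  have hc : Nat.card G = p ^ (6 + k) := by rw [Nat.card_eq_fintype_card, hcard]
  have := mc_nilp hp hc
  rw [mc_nilClass] at hmax
  obtain ⟨H, _, _, f, hf, h1, h2⟩ := mc_exists_quot hp k G hc hmax
  exact mc_core hp f hf h1 h2
end
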